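/- If x ∈ (0,1) is an irrational algebraic number, then for every integer base q ≥ 2 the complexity function p(n) of its base-q digit sequence satisfies liminf_{n→∞} (p(n) − n) = +∞. -/

import Mathlib

/-!
Suppose `p n ≤ n + C` for infinitely many `n`. For such `n` the Rauzy graph of order `n` has a
bounded number of excess edges, so the digits of `x` beyond a bounded multiple of `n` split into two
return blocks, both of length comparable to `n`. Let `w` be the resulting binary word. Summing
geometric progressions, `x` is related by an affine map with coefficients at most `q ^ O(n)` to
`y = ∑ q ^ (-(G (w 0) + ⋯ + G (w (k - 1))))`, the sum being over the `k` for which `w k = true`,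
where `G b` is the length of the block `b`.

Along an ultrafilter of such `n` the words `w` converge to a word `W`, and `y` is asymptotically the
value at `(q ^ (-G true), q ^ (-G false))` of a power series `f` that only depends on `W`: its
monomials follow the walk in `ℕ²` encoded by `W`. If the two lengths are asymptotically linearly
dependent, a power series in one variable plays this role instead. Mahler's method (an auxiliary
polynomial from Siegel's lemma, against Liouville's inequality) shows that `f` is algebraic over the
polynomials. An algebraic power series is annihilated by a differential operator, and since the
coefficients of `f` form finitely many local patterns up to scaling, this forces `f` to be
rational. A rational `f` would make `y`, hence `x`, rational.
-/

open Filter MeasureTheory Topology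
open scoped Classical

/-- The `(n+1)`-st digit (i.e. `ε_{n+1}`, `0`-indexed by `n`) of the base-`q` expansion of `x`,
chosen as the greedy expansion (never eventually equal to `q - 1`). -/
noncomputable def qdigit (q : ℕ) (x : ℝ) (n : ℕ) : ℕ :=
  (⌊x * (q : ℝ) ^ (n + 1)⌋).toNat % q

/-- The complexity function of `x` to base `q`: the number of distinct words of length `n`
occurring as blocks of consecutive digits in the base-`q` digit sequence of `x`. -/
noncomputable def qComplexity (q : ℕ) (x : ℝ) (n : ℕ) : ℕ :=
  Set.ncard {w : Fin n → ℕ | ∃ k : ℕ, ∀ i : Fin n, qdigit q x (k + (i : ℕ)) = w i}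

section Liouville

open Polynomial

lemma isIntegral_pow_mul_aeval {R : Type*} [CommRing R] {g : R} {l : ℤ}
    (hl : IsIntegral ℤ (l • g)) {J : ℕ} {P : ℤ[X]} (hP : P.natDegree ≤ J) :
    IsIntegral ℤ ((l : R) ^ J * aeval g P) := by
  have hsum : (l : R) ^ J * aeval g P =
      ∑ i ∈ Finset.range (J + 1), algebraMap ℤ R (P.coeff i * l ^ (J - i)) * (l • g) ^ i := by
    rw [aeval_eq_sum_range' (Nat.lt_succ_of_le hP), Finset.mul_sum]
    refine Finset.sum_congr rfl fun i hi => ?_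
    have hi : i ≤ J := Nat.lt_succ_iff.1 (Finset.mem_range.1 hi)
    rw [← Nat.sub_add_cancel hi, pow_add, Nat.add_sub_cancel]
    simp only [zsmul_eq_mul, mul_pow, algebraMap_int_eq, eq_intCast]
    push_cast
    ring
  rw [hsum]
  exact IsIntegral.sum _ fun i _ => isIntegral_algebraMap.mul (hl.pow i)

variable {K : Type*} [Field K] [NumberField K] {θ : K}

lemma one_le_prod_norm_algHom (hθ : IsIntegral ℤ θ) (hθ0 : θ ≠ 0) :
    1 ≤ ∏ σ : K →ₐ[ℚ] ℂ, ‖σ θ‖ := by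
  obtain ⟨N, hN⟩ := IsIntegrallyClosed.isIntegral_iff.1 (Algebra.isIntegral_norm ℚ hθ)
  have hN0 : N ≠ 0 := by
    rintro rfl
    rw [map_zero] at hN
    exact hθ0 (Algebra.norm_eq_zero_iff.1 hN.symm)
  rw [← norm_prod, ← Algebra.norm_eq_prod_embeddings ℚ ℂ θ, ← hN]
  simp only [eq_intCast, map_intCast, Complex.norm_intCast]
  exact_mod_cast Int.one_le_abs hN0

lemma one_le_norm_mul_pow_card (hθ : IsIntegral ℤ θ) (hθ0 : θ ≠ 0) {B : ℝ} (hB : 1 ≤ B)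
    (hle : ∀ σ : K →ₐ[ℚ] ℂ, ‖σ θ‖ ≤ B) (σ₀ : K →ₐ[ℚ] ℂ) :
    1 ≤ ‖σ₀ θ‖ * B ^ Fintype.card (K →ₐ[ℚ] ℂ) := by
  calc 1 ≤ ∏ σ : K →ₐ[ℚ] ℂ, ‖σ θ‖ := one_le_prod_norm_algHom hθ hθ0
    _ = ‖σ₀ θ‖ * ∏ σ ∈ Finset.univ.erase σ₀, ‖σ θ‖ :=
      (Finset.mul_prod_erase _ _ (Finset.mem_univ σ₀)).symm
    _ ≤ ‖σ₀ θ‖ * B ^ (Finset.univ.erase σ₀).card := by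
      gcongr
      rw [← Finset.prod_const]
      exact Finset.prod_le_prod (fun _ _ => norm_nonneg _) fun σ _ => hle σ
    _ ≤ ‖σ₀ θ‖ * B ^ Fintype.card (K →ₐ[ℚ] ℂ) := by
      gcongr
      exact Finset.card_le_univ _

lemma exists_one_le_norm_aeval_mul {x : ℂ} (hx : IsAlgebraic ℚ x) :
    ∃ (d : ℕ) (X l : ℝ), 0 ≤ X ∧ 1 ≤ l ∧ ∀ (J : ℕ) (P : ℤ[X]) (B : ℝ), 1 ≤ B →
      P.natDegree ≤ J → (∀ z : ℂ, ‖z‖ ≤ X → ‖aeval z P‖ ≤ B) → aeval x P ≠ 0 →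
      1 ≤ ‖aeval x P‖ * (l ^ J * B) ^ d := by
  let K := IntermediateField.adjoin ℚ {x}
  have : FiniteDimensional ℚ K := IntermediateField.adjoin.finiteDimensional hx.isIntegral
  have : NumberField K := ⟨⟩
  let g : K := IntermediateField.AdjoinSimple.gen ℚ x
  obtain ⟨l, hl0, hl⟩ := ((IsFractionRing.isAlgebraic_iff ℤ ℚ K).2
    (Algebra.IsAlgebraic.isAlgebraic g)).exists_integral_multiple
  have hl1 : 1 ≤ |(l : ℝ)| := by exact_mod_cast Int.one_le_abs hl0
  refine ⟨Fintype.card (K →ₐ[ℚ] ℂ) + 1, ∑ σ : K →ₐ[ℚ] ℂ, ‖σ g‖, |(l : ℝ)|,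
    Finset.sum_nonneg fun _ _ => norm_nonneg _, hl1, fun J P B hB hJ hPB hPx => ?_⟩
  have hnorm (σ : K →ₐ[ℚ] ℂ) : ‖σ (l ^ J * aeval g P)‖ = |(l : ℝ)| ^ J * ‖aeval (σ g) P‖ := by
    have := aeval_algHom_apply (σ.restrictScalars ℤ) g P
    simp only [AlgHom.coe_restrictScalars'] at this
    rw [map_mul, map_pow, map_intCast, norm_mul, norm_pow, Complex.norm_intCast, this]
  have hx0 : ‖K.val (l ^ J * aeval g P)‖ = |(l : ℝ)| ^ J * ‖aeval x P‖ := hnorm K.val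
  have hle (σ : K →ₐ[ℚ] ℂ) : ‖σ (l ^ J * aeval g P)‖ ≤ |(l : ℝ)| ^ J * B := by
    rw [hnorm]
    gcongr
    exact hPB _ (Finset.single_le_sum (f := fun τ : K →ₐ[ℚ] ℂ => ‖τ g‖)
      (fun _ _ => norm_nonneg _) (Finset.mem_univ σ))
  have hlJ : 0 < |(l : ℝ)| ^ J := by positivity
  have hne : (l ^ J * aeval g P : K) ≠ 0 := by
    rw [← norm_pos_iff] at hPx
    intro h
    rw [h, map_zero, norm_zero] at hx0
    exact (mul_pos hlJ hPx).ne hx0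
  have hlJB : 1 ≤ |(l : ℝ)| ^ J * B := one_le_mul_of_one_le_of_one_le (one_le_pow₀ hl1) hB
  calc 1 ≤ |(l : ℝ)| ^ J * ‖aeval x P‖ * (|(l : ℝ)| ^ J * B) ^ Fintype.card (K →ₐ[ℚ] ℂ) :=
        hx0 ▸ one_le_norm_mul_pow_card (isIntegral_pow_mul_aeval hl hJ) hne hlJB hle K.val
    _ = ‖aeval x P‖ * (|(l : ℝ)| ^ J * 1 * (|(l : ℝ)| ^ J * B) ^ Fintype.card (K →ₐ[ℚ] ℂ)) := by
        ring
    _ ≤ ‖aeval x P‖ * (|(l : ℝ)| ^ J * B) ^ (Fintype.card (K →ₐ[ℚ] ℂ) + 1) := by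
        rw [pow_succ']
        gcongr

end Liouville

section AffineRelated

open Polynomial

/-- `y` is the image of `x` under an invertible affine map, up to a common denominator `κ`, all of
whose integer coefficients are at most `V` in absolute value. -/
def AffineRelated (V x y : ℝ) : Prop :=
  ∃ g h κ : ℤ, g ≠ 0 ∧ κ ≠ 0 ∧ |(g : ℝ)| ≤ V ∧ |(h : ℝ)| ≤ V ∧ |(κ : ℝ)| ≤ V ∧ κ * y = g * x + h

lemma AffineRelated.mono {V V' x y : ℝ} (hV : V ≤ V') : AffineRelated V x y → AffineRelated V' x y
  | ⟨g, h, κ, hg, hκ, hgV, hhV, hκV, hxy⟩ =>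
    ⟨g, h, κ, hg, hκ, hgV.trans hV, hhV.trans hV, hκV.trans hV, hxy⟩

lemma AffineRelated.irrational {V x y : ℝ} (hxy : AffineRelated V x y) (hx : Irrational x) :
    Irrational y := by
  obtain ⟨g, h, κ, hg, -, -, -, -, hκy⟩ := hxy
  have : Irrational (κ * y) := hκy ▸ (hx.intCast_mul hg).add_intCast h
  exact this.of_intCast_mul κ

/-- The polynomial `κ ^ J * A ((g X + h) / κ)`. -/
noncomputable def affineSubst (J : ℕ) (g h κ : ℤ) (A : ℤ[X]) : ℤ[X] :=
  ∑ j ∈ Finset.range (J + 1), C (A.coeff j * κ ^ (J - j)) * (C g * X + C h) ^ j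

variable {J : ℕ} {g h κ : ℤ} {A : ℤ[X]}

lemma aeval_affineSubst {R : Type*} [CommRing R] {x y : R} (hxy : κ * y = g * x + h)
    (hA : A.natDegree ≤ J) : aeval x (affineSubst J g h κ A) = κ ^ J * aeval y A := by
  rw [affineSubst, aeval_eq_sum_range' (Nat.lt_succ_of_le hA), Finset.mul_sum]
  simp only [map_sum, map_mul, map_pow, map_add, aeval_X, eq_intCast, map_intCast, ← hxy]
  refine Finset.sum_congr rfl fun j hj => ?_
  rw [← pow_sub_mul_pow _ (Finset.mem_range_succ_iff.1 hj), mul_pow, zsmul_eq_mul]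
  ring

lemma natDegree_affineSubst_le : (affineSubst J g h κ A).natDegree ≤ J := by
  refine natDegree_sum_le_of_forall_le _ _ fun j hj => (natDegree_C_mul_le _ _).trans ?_
  calc ((C g * X + C h) ^ j).natDegree ≤ j * (C g * X + C h).natDegree := natDegree_pow_le
    _ ≤ j * 1 := Nat.mul_le_mul_left _ natDegree_linear_le
    _ ≤ J := by simpa using Finset.mem_range_succ_iff.1 hj

lemma norm_aeval_affineSubst_le {z : ℂ} {X V W : ℝ} (hV : 1 ≤ V) (hz : ‖z‖ ≤ X)
    (hA : ∀ j, |(A.coeff j : ℝ)| ≤ W) (hg : |(g : ℝ)| ≤ V) (hh : |(h : ℝ)| ≤ V)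
    (hκ : |(κ : ℝ)| ≤ V) :
    ‖aeval z (affineSubst J g h κ A)‖ ≤ (J + 1) * (X + 1) ^ J * (W * V ^ J) := by
  have hX : 1 ≤ X + 1 := by linarith [norm_nonneg z]
  have hW : 0 ≤ W := (abs_nonneg _).trans (hA 0)
  have hlin : ‖(g : ℂ) * z + h‖ ≤ V * (X + 1) := by
    calc ‖(g : ℂ) * z + h‖ ≤ ‖(g : ℂ)‖ * ‖z‖ + ‖(h : ℂ)‖ := by
          rw [← norm_mul]
          exact norm_add_le _ _
      _ ≤ V * X + V := by
          rw [Complex.norm_intCast, Complex.norm_intCast]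
          gcongr
      _ = V * (X + 1) := by ring
  have hterm (j : ℕ) (hj : j ∈ Finset.range (J + 1)) :
      ‖(A.coeff j * κ ^ (J - j) : ℂ) * (g * z + h) ^ j‖ ≤ (X + 1) ^ J * (W * V ^ J) := by
    have hj : j ≤ J := Finset.mem_range_succ_iff.1 hj
    rw [norm_mul, norm_mul, norm_pow, norm_pow, Complex.norm_intCast, Complex.norm_intCast]
    calc |(A.coeff j : ℝ)| * |(κ : ℝ)| ^ (J - j) * ‖(g : ℂ) * z + h‖ ^ j
        ≤ W * V ^ (J - j) * (V * (X + 1)) ^ j := by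
          gcongr
          exact hA j
      _ = (X + 1) ^ j * (W * (V ^ (J - j) * V ^ j)) := by
          rw [mul_pow]
          ring
      _ ≤ (X + 1) ^ J * (W * V ^ J) := by
          rw [pow_sub_mul_pow V hj]
          gcongr
  calc ‖aeval z (affineSubst J g h κ A)‖
      ≤ ∑ j ∈ Finset.range (J + 1), (X + 1) ^ J * (W * V ^ J) := by
        simp only [affineSubst, map_sum, map_mul, map_pow, map_add, aeval_X, eq_intCast,
          map_intCast]
        exact norm_sum_le_of_le _ hterm
    _ = (J + 1) * (X + 1) ^ J * (W * V ^ J) := by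
        rw [Finset.sum_const, Finset.card_range, nsmul_eq_mul]
        push_cast
        ring

lemma exists_le_abs_aeval_mul_of_affineRelated {x : ℝ} (hx : IsAlgebraic ℚ x) :
    ∃ d : ℕ, ∀ J : ℕ, ∃ C : ℝ, 0 < C ∧ ∀ (A : ℤ[X]) (y V W : ℝ), 1 ≤ V → 1 ≤ W →
      A.natDegree ≤ J → (∀ j, |(A.coeff j : ℝ)| ≤ W) → AffineRelated V x y → aeval y A ≠ 0 →
      C ≤ |aeval y A| * (W * V ^ J) ^ d := by
  obtain ⟨d, X, l, hX, hl, hLiouville⟩ := exists_one_le_norm_aeval_mul (hx.algebraMap (A := ℂ))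
  refine ⟨d + 1, fun J => ⟨((l ^ J * ((J + 1) * (X + 1) ^ J)) ^ d)⁻¹, by positivity, ?_⟩⟩
  rintro A y V W hV hW hA hAW ⟨g, h, κ, -, hκ0, hg, hh, hκ, hxy⟩ hy
  set B : ℝ := (J + 1) * (X + 1) ^ J * (W * V ^ J)
  have hB : 1 ≤ B := by
    have hX1 : 1 ≤ (X + 1) ^ J := one_le_pow₀ (by linarith)
    have hJ : (1 : ℝ) ≤ J + 1 := by simp
    have hVJ := one_le_pow₀ hV (n := J)
    exact one_le_mul_of_one_le_of_one_le (one_le_mul_of_one_le_of_one_le hJ hX1)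
      (one_le_mul_of_one_le_of_one_le hW hVJ)
  have hval : ‖aeval (algebraMap ℝ ℂ x) (affineSubst J g h κ A)‖ = |(κ : ℝ)| ^ J * |aeval y A| := by
    rw [aeval_algebraMap_apply, aeval_affineSubst hxy hA, Complex.coe_algebraMap, Complex.norm_real,
      Real.norm_eq_abs, abs_mul, abs_pow]
  have hκJ : |(κ : ℝ)| ^ J ≤ W * V ^ J :=
    (pow_le_pow_left₀ (abs_nonneg _) hκ J).trans (le_mul_of_one_le_left (by positivity) hW)
  have hpos : 0 < |(κ : ℝ)| ^ J * |aeval y A| := by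
    have : (κ : ℝ) ≠ 0 := by exact_mod_cast hκ0
    positivity
  have hmain := hLiouville J _ B hB natDegree_affineSubst_le
    (fun z hz => norm_aeval_affineSubst_le hV hz hAW hg hh hκ)
    (norm_pos_iff.1 (hval ▸ hpos))
  rw [inv_le_iff_one_le_mul₀ (by positivity)]
  calc 1 ≤ |(κ : ℝ)| ^ J * |aeval y A| * (l ^ J * B) ^ d := hval ▸ hmain
    _ ≤ W * V ^ J * |aeval y A| * (l ^ J * B) ^ d := by gcongr
    _ = |aeval y A| * (W * V ^ J) ^ (d + 1) * (l ^ J * ((J + 1) * (X + 1) ^ J)) ^ d := by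
      simp only [B, mul_pow]
      ring

end AffineRelated

section InvPow

variable {σ : Type*}

/-- The point whose `i`-th coordinate is `b ^ (-m i)`; a monomial of exponent `γ` takes there the
value `b ^ (-Finsupp.weight m γ)`. -/
noncomputable def invPow (b : ℝ) (m : σ → ℕ) (i : σ) : ℝ :=
  (b ^ m i)⁻¹

lemma weight_le_degree_mul {m : σ → ℕ} {B : ℕ} (hm : ∀ i, m i ≤ B) (γ : σ →₀ ℕ) :
    Finsupp.weight m γ ≤ γ.degree * B := by
  rw [Finsupp.weight_apply, Finsupp.degree_apply, Finset.sum_mul]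
  exact Finset.sum_le_sum fun i _ => Nat.mul_le_mul_left _ (hm i)

lemma degree_mul_le_weight {m : σ → ℕ} {B : ℕ} (hm : ∀ i, B ≤ m i) (γ : σ →₀ ℕ) :
    γ.degree * B ≤ Finsupp.weight m γ := by
  rw [Finsupp.weight_apply, Finsupp.degree_apply, Finset.sum_mul]
  exact Finset.sum_le_sum fun i _ => Nat.mul_le_mul_left _ (hm i)

lemma prod_invPow (b : ℝ) (m : σ → ℕ) (γ : σ →₀ ℕ) :
    ∏ i ∈ γ.support, invPow b m i ^ γ i = (b ^ Finsupp.weight m γ)⁻¹ := by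
  simp only [Finsupp.weight_apply, Finsupp.sum, ← Finset.prod_pow_eq_pow_sum, invPow, inv_pow,
    Finset.prod_inv_distrib, ← pow_mul, smul_eq_mul, mul_comm]

lemma aeval_invPow (b : ℝ) (m : σ → ℕ) (G : MvPolynomial σ ℚ) :
    MvPolynomial.aeval (invPow b m) G =
      ∑ γ ∈ G.support, ((G.coeff γ : ℚ) : ℝ) * (b ^ Finsupp.weight m γ)⁻¹ := by
  rw [MvPolynomial.aeval_def, MvPolynomial.eval₂_eq]
  simp only [prod_invPow, eq_ratCast]

lemma abs_aeval_invPow_le {b : ℝ} {m : σ → ℕ} {G : MvPolynomial σ ℚ} {E : ℕ} (hb : 1 ≤ b)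
    (hE : ∀ γ ∈ G.support, E ≤ Finsupp.weight m γ) :
    |MvPolynomial.aeval (invPow b m) G| ≤
      (∑ γ ∈ G.support, |((G.coeff γ : ℚ) : ℝ)|) * (b ^ E)⁻¹ := by
  rw [aeval_invPow, Finset.sum_mul]
  refine (Finset.abs_sum_le_sum_abs _ _).trans (Finset.sum_le_sum fun γ hγ => ?_)
  rw [abs_mul, abs_of_nonneg (a := (b ^ _)⁻¹) (by positivity)]
  gcongr
  exact hE γ hγ

lemma exists_nat_mul_coeff_mem_range_intCast (G : MvPolynomial σ ℚ) :
    ∃ Δ : ℕ, 0 < Δ ∧ ∀ γ, (Δ * (G.coeff γ : ℚ) : ℝ) ∈ Set.range ((↑) : ℤ → ℝ) := by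
  refine ⟨∏ γ ∈ G.support, (G.coeff γ).den,
    Finset.prod_pos fun γ _ => (G.coeff γ).den_pos, fun γ => ?_⟩
  by_cases hγ : γ ∈ G.support
  · obtain ⟨k, hk⟩ := Finset.dvd_prod_of_mem (fun γ => (G.coeff γ).den) hγ
    refine ⟨k * (G.coeff γ).num, ?_⟩
    rw [hk]
    conv_rhs => rw [Rat.cast_def (G.coeff γ)]
    push_cast
    field_simp
  · exact ⟨0, by simp [MvPolynomial.notMem_support_iff.1 hγ]⟩

lemma exists_nat_mul_pow_mul_aeval_mem_range_intCast (G : MvPolynomial σ ℚ) :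
    ∃ Δ : ℕ, 0 < Δ ∧ ∀ (q E : ℕ) (m : σ → ℕ), q ≠ 0 →
      (∀ γ ∈ G.support, Finsupp.weight m γ ≤ E) →
      (Δ * q ^ E * MvPolynomial.aeval (invPow q m) G : ℝ) ∈ (Int.castRingHom ℝ).range := by
  obtain ⟨Δ, hΔ, hint⟩ := exists_nat_mul_coeff_mem_range_intCast G
  refine ⟨Δ, hΔ, fun q E m hq hE => ?_⟩
  rw [aeval_invPow, Finset.mul_sum]
  refine sum_mem fun γ hγ => ?_
  have hterm : (Δ * q ^ E * ((G.coeff γ : ℚ) * (q ^ Finsupp.weight m γ : ℝ)⁻¹) : ℝ) =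
      Δ * (G.coeff γ : ℚ) * ((q ^ (E - Finsupp.weight m γ) : ℕ) : ℝ) := by
    push_cast
    rw [pow_sub₀ _ (by exact_mod_cast hq) (hE γ hγ)]
    ring
  rw [hterm]
  exact mul_mem (hint γ) (natCast_mem _ _)

end InvPow

section EvalAt

variable {σ : Type*}

/-- Evaluation of a polynomial `P(z, Y)`, seen as a polynomial in `Y` over the polynomials in `z`,
at `z = s` and `Y = y`. -/
noncomputable def evalAt (s : σ → ℝ) (y : ℝ) : Polynomial (MvPolynomial σ ℚ) →+* ℝ :=
  Polynomial.eval₂RingHom (MvPolynomial.aeval s : MvPolynomial σ ℚ →ₐ[ℚ] ℝ) y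

lemma evalAt_eq_eval_map (s : σ → ℝ) (y : ℝ) (P : Polynomial (MvPolynomial σ ℚ)) :
    evalAt s y P = (P.map (MvPolynomial.aeval (R := ℚ) s : _ →+* ℝ)).eval y :=
  Polynomial.eval₂_eq_eval_map _

lemma exists_nat_mul_pow_mul_aeval_coeff_mem_range_intCast (P : Polynomial (MvPolynomial σ ℚ)) :
    ∃ Δ : ℕ, 0 < Δ ∧ ∀ (q E : ℕ) (m : σ → ℕ), q ≠ 0 →
      (∀ j, ∀ γ ∈ (P.coeff j).support, Finsupp.weight m γ ≤ E) → ∀ j,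
      (Δ * q ^ E * MvPolynomial.aeval (invPow q m) (P.coeff j) : ℝ) ∈
        (Int.castRingHom ℝ).range := by
  choose Δ hΔ hint using fun j => exists_nat_mul_pow_mul_aeval_mem_range_intCast (P.coeff j)
  refine ⟨∏ j ∈ P.support, Δ j, Finset.prod_pos fun j _ => hΔ j, fun q E m hq hE j => ?_⟩
  by_cases hj : j ∈ P.support
  · obtain ⟨k, hk⟩ := Finset.dvd_prod_of_mem Δ hj
    have hmul := mul_mem (natCast_mem _ k) (hint j q E m hq (hE j))
    rw [hk, Nat.cast_mul]
    convert hmul using 1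
    ring
  · rw [Polynomial.notMem_support_iff.1 hj, map_zero, mul_zero]
    exact zero_mem _

lemma exists_abs_aeval_coeff_le (P : Polynomial (MvPolynomial σ ℚ)) :
    ∃ B : ℝ, 0 ≤ B ∧ ∀ (b : ℝ) (m : σ → ℕ), 1 ≤ b → ∀ j,
      |MvPolynomial.aeval (invPow b m) (P.coeff j)| ≤ B := by
  set S : ℕ → ℝ := fun j => ∑ γ ∈ (P.coeff j).support, |(((P.coeff j).coeff γ : ℚ) : ℝ)|
  have hS (j : ℕ) : 0 ≤ S j := Finset.sum_nonneg fun _ _ => abs_nonneg _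
  refine ⟨∑ j ∈ P.support, S j, Finset.sum_nonneg fun j _ => hS j, fun b m hb j => ?_⟩
  by_cases hj : j ∈ P.support
  · refine (abs_aeval_invPow_le hb fun _ _ => Nat.zero_le _).trans ?_
    rw [pow_zero, inv_one, mul_one]
    exact Finset.single_le_sum (fun j _ => hS j) hj
  · rw [Polynomial.notMem_support_iff.1 hj, map_zero, abs_zero]
    exact Finset.sum_nonneg fun j _ => hS j

lemma exists_int_polynomial_aeval_eq_mul_evalAt (P : Polynomial (MvPolynomial σ ℚ)) :
    ∃ (Δ : ℕ) (B : ℝ), 0 < Δ ∧ 1 ≤ B ∧ ∀ (q E : ℕ) (m : σ → ℕ), q ≠ 0 →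
      (∀ j, ∀ γ ∈ (P.coeff j).support, Finsupp.weight m γ ≤ E) →
      ∃ A : Polynomial ℤ, A.natDegree ≤ P.natDegree ∧ (∀ j, |(A.coeff j : ℝ)| ≤ B * q ^ E) ∧
        ∀ y : ℝ, Polynomial.aeval y A = Δ * q ^ E * evalAt (invPow q m) y P := by
  obtain ⟨Δ, hΔ, hint⟩ := exists_nat_mul_pow_mul_aeval_coeff_mem_range_intCast P
  obtain ⟨B, hB, hle⟩ := exists_abs_aeval_coeff_le P
  refine ⟨Δ, 1 + Δ * B, hΔ, by linarith [mul_nonneg Δ.cast_nonneg hB], fun q E m hq hE => ?_⟩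
  set R := Polynomial.C (Δ * q ^ E : ℝ) *
    P.map (MvPolynomial.aeval (R := ℚ) (invPow q m) : _ →+* ℝ) with hRdef
  have hcoeff (j : ℕ) : R.coeff j = Δ * q ^ E * MvPolynomial.aeval (invPow q m) (P.coeff j) := by
    rw [hRdef, Polynomial.coeff_C_mul, Polynomial.coeff_map, RingHom.coe_coe]
  have hR : R ∈ Polynomial.lifts (Int.castRingHom ℝ) :=
    (Polynomial.lifts_iff_coeff_lifts R).2 fun j => hcoeff j ▸ hint q E m hq hE j
  obtain ⟨A, hA, hdeg⟩ := Polynomial.exists_natDegree_eq_of_mem_lifts hR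
  refine ⟨A, ?_, fun j => ?_, fun y => ?_⟩
  · rw [hdeg]
    exact (Polynomial.natDegree_C_mul_le _ _).trans Polynomial.natDegree_map_le
  · have hAj : (A.coeff j : ℝ) = R.coeff j := by rw [← hA, Polynomial.coeff_map, eq_intCast]
    rw [hAj, hcoeff, abs_mul, abs_of_nonneg (by positivity)]
    calc (Δ * q ^ E : ℝ) * |MvPolynomial.aeval (invPow q m) (P.coeff j)| ≤ Δ * q ^ E * B := by
          gcongr
          exact hle q m (by exact_mod_cast Nat.one_le_iff_ne_zero.2 hq) j
      _ = Δ * B * q ^ E := by ring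
      _ ≤ (1 + Δ * B) * q ^ E := by
          gcongr
          linarith
  · rw [evalAt_eq_eval_map, Polynomial.aeval_def, Polynomial.eval₂_eq_eval_map, algebraMap_int_eq,
      hA, Polynomial.eval_mul, Polynomial.eval_C]

lemma exists_le_abs_evalAt_mul {x : ℝ} (hx : IsAlgebraic ℚ x) {q : ℕ} (hq : q ≠ 0) (c : ℕ) :
    ∃ c₀ : ℕ, ∀ (P : Polynomial (MvPolynomial σ ℚ)) (J N : ℕ), P.natDegree ≤ J →
      (∀ j, (P.coeff j).totalDegree ≤ N) → ∃ C : ℝ, 0 < C ∧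
      ∀ (H : ℕ) (m : σ → ℕ) (y : ℝ), (∀ i, m i ≤ c * H) → AffineRelated (q ^ (c * H)) x y →
        evalAt (invPow q m) y P ≠ 0 →
        C ≤ |evalAt (invPow q m) y P| * q ^ (c₀ * (N + J) * H) := by
  obtain ⟨d, hd⟩ := exists_le_abs_aeval_mul_of_affineRelated hx
  refine ⟨c * (d + 1), fun P J N hJ hN => ?_⟩
  obtain ⟨C, hC, hlow⟩ := hd J
  obtain ⟨Δ, B, hΔ, hB, hclear⟩ := exists_int_polynomial_aeval_eq_mul_evalAt P
  have hΔ : (0 : ℝ) < Δ := by exact_mod_cast hΔ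
  have hq1 : (1 : ℝ) ≤ q := by exact_mod_cast Nat.one_le_iff_ne_zero.2 hq
  refine ⟨C / (Δ * B ^ d), by positivity, fun H m y hm hxy hne => ?_⟩
  have hweight (j : ℕ) (γ) (hγ : γ ∈ (P.coeff j).support) :
      Finsupp.weight m γ ≤ N * (c * H) := by
    have hdeg : γ.degree ≤ N := (MvPolynomial.le_totalDegree hγ).trans (hN j)
    exact (weight_le_degree_mul hm γ).trans (Nat.mul_le_mul_right _ hdeg)
  obtain ⟨A, hAdeg, hAcoeff, hA⟩ := hclear q _ m hq hweight
  have hQ : 0 < (q : ℝ) ^ (N * (c * H)) := by positivity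
  have hmain := hlow A y (q ^ (c * H)) (B * q ^ (N * (c * H))) (one_le_pow₀ hq1)
    (one_le_mul_of_one_le_of_one_le hB (one_le_pow₀ hq1)) (hAdeg.trans hJ) hAcoeff hxy
    (hA y ▸ mul_ne_zero (mul_pos hΔ hQ).ne' hne)
  rw [hA y, abs_mul, abs_of_pos (mul_pos hΔ hQ)] at hmain
  rw [div_le_iff₀ (by positivity)]
  calc C ≤ _ := hmain
    _ = |evalAt (invPow q m) y P| *
          q ^ (N * (c * H) + (N * (c * H) + c * H * J) * d) * (Δ * B ^ d) := by
        simp only [pow_add, pow_mul, mul_pow]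
        ring
    _ ≤ |evalAt (invPow q m) y P| * q ^ (c * (d + 1) * (N + J) * H) * (Δ * B ^ d) := by
        gcongr
        nlinarith [Nat.zero_le (c * H * J)]

end EvalAt

section Expansion

open Asymptotics

variable {ι σ : Type*} {l : Filter ι} {b : ℝ} {H : ι → ℕ} {m : ι → σ → ℕ} {y y₁ y₂ : ι → ℝ}
  {f f₁ f₂ : MvPowerSeries σ ℚ}

/-- `y` has the power series `f` as asymptotic expansion at the points `invPow b (m n)`, where the
error of a truncation of order `K` is measured by `b ^ (-K * H n)`. -/
def HasExpansion (l : Filter ι) (b : ℝ) (H : ι → ℕ) (m : ι → σ → ℕ) (y : ι → ℝ)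
    (f : MvPowerSeries σ ℚ) : Prop :=
  ∀ K : ℕ, ∃ G : MvPolynomial σ ℚ, K ≤ (f - G).order ∧
    (fun n => y n - MvPolynomial.aeval (invPow b (m n)) G) =O[l] fun n => (b ^ (K * H n))⁻¹

lemma hasExpansion_aeval (G : MvPolynomial σ ℚ) :
    HasExpansion l b H m (fun n => MvPolynomial.aeval (invPow b (m n)) G) G := fun K =>
  ⟨G, by simp, by simpa using isBigO_zero _ _⟩

lemma isBigO_aeval_invPow (hb : 1 ≤ b) (m : ι → σ → ℕ) (G : MvPolynomial σ ℚ) :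
    (fun n => MvPolynomial.aeval (invPow b (m n)) G) =O[l] fun _ => (1 : ℝ) :=
  .of_bound (∑ γ ∈ G.support, |((G.coeff γ : ℚ) : ℝ)|) <| .of_forall fun n => by
    simpa using abs_aeval_invPow_le (m := m n) (G := G) hb fun _ _ => Nat.zero_le _

lemma HasExpansion.isBigO_one (hb : 1 ≤ b) (hy : HasExpansion l b H m y f) :
    y =O[l] fun _ => (1 : ℝ) := by
  obtain ⟨G, -, hG⟩ := hy 0
  simp only [zero_mul, pow_zero, inv_one] at hG
  exact (hG.add (isBigO_aeval_invPow hb m G)).congr_left fun n => sub_add_cancel _ _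

lemma HasExpansion.add (h₁ : HasExpansion l b H m y₁ f₁) (h₂ : HasExpansion l b H m y₂ f₂) :
    HasExpansion l b H m (fun n => y₁ n + y₂ n) (f₁ + f₂) := by
  intro K
  obtain ⟨G₁, hord₁, hG₁⟩ := h₁ K
  obtain ⟨G₂, hord₂, hG₂⟩ := h₂ K
  refine ⟨G₁ + G₂, ?_, (hG₁.add hG₂).congr_left fun n => by rw [map_add]; ring⟩
  rw [MvPolynomial.coe_add, add_sub_add_comm]
  exact (le_min hord₁ hord₂).trans MvPowerSeries.min_order_le_add

lemma HasExpansion.mul (hb : 1 ≤ b) (h₁ : HasExpansion l b H m y₁ f₁)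
    (h₂ : HasExpansion l b H m y₂ f₂) :
    HasExpansion l b H m (fun n => y₁ n * y₂ n) (f₁ * f₂) := by
  intro K
  obtain ⟨G₁, hord₁, hG₁⟩ := h₁ K
  obtain ⟨G₂, hord₂, hG₂⟩ := h₂ K
  refine ⟨G₁ * G₂, ?_, ?_⟩
  · have hsplit : f₁ * f₂ - ((G₁ * G₂ : MvPolynomial σ ℚ) : MvPowerSeries σ ℚ) =
        (f₁ - G₁) * f₂ + G₁ * (f₂ - G₂) := by
      rw [MvPolynomial.coe_mul]
      ring
    rw [hsplit]
    refine le_trans (le_min ?_ ?_) MvPowerSeries.min_order_le_add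
    · exact (hord₁.trans le_self_add).trans MvPowerSeries.le_order_mul
    · exact (hord₂.trans le_add_self).trans MvPowerSeries.le_order_mul
  · have hleft := hG₁.mul (h₂.isBigO_one hb)
    have hright := (isBigO_aeval_invPow hb m G₁).mul hG₂
    simp only [mul_one, one_mul] at hleft hright
    refine (hleft.add hright).congr_left fun n => ?_
    rw [map_mul]
    ring

lemma HasExpansion.polynomialEval (hb : 1 ≤ b) (hy : HasExpansion l b H m y f)
    (P : Polynomial (MvPolynomial σ ℚ)) :
    HasExpansion l b H m (fun n => evalAt (invPow b (m n)) (y n) P) (Polynomial.aeval f P) := by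
  induction P using Polynomial.induction_on with
  | C a => simpa [evalAt] using! hasExpansion_aeval a
  | add P Q hP hQ => simpa using! hP.add hQ
  | monomial k a ih =>
    convert! ih.mul hb hy using 1
    · simp [evalAt, pow_succ, mul_assoc]
    · simp [pow_succ, mul_assoc]

lemma HasExpansion.isBigO_of_le_order (hb : 1 ≤ b) (hm : ∀ n i, H n ≤ m n i)
    (hy : HasExpansion l b H m y f) {M : ℕ} (hM : M ≤ f.order) :
    y =O[l] fun n => (b ^ (M * H n))⁻¹ := by
  obtain ⟨G, hord, hG⟩ := hy M
  have hdeg (γ) (hγ : γ ∈ G.support) : M ≤ γ.degree := by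
    have hGord : (M : ℕ∞) ≤ (G : MvPowerSeries σ ℚ).order := by
      rw [show (G : MvPowerSeries σ ℚ) = f + -(f - G) by ring]
      refine le_trans (le_min hM ?_) MvPowerSeries.min_order_le_add
      rwa [MvPowerSeries.order_neg]
    exact_mod_cast hGord.trans (MvPowerSeries.order_le (by simpa using hγ))
  have hbound : (fun n => MvPolynomial.aeval (invPow b (m n)) G) =O[l]
      fun n => (b ^ (M * H n))⁻¹ :=
    .of_bound (∑ γ ∈ G.support, |((G.coeff γ : ℚ) : ℝ)|) <| .of_forall fun n => by
      rw [Real.norm_eq_abs, Real.norm_of_nonneg (by positivity)]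
      exact abs_aeval_invPow_le hb fun γ hγ =>
        (Nat.mul_le_mul_right _ (hdeg γ hγ)).trans (degree_mul_le_weight (hm n) γ)
  exact (hG.add hbound).congr_left fun n => by ring

end Expansion

section Scale

open Asymptotics

variable {ι σ : Type*} {l : Filter ι} {b : ℝ} {c : ℕ} {H : ι → ℕ} {m : ι → σ → ℕ} {y : ι → ℝ}
  {f : MvPowerSeries σ ℚ}

/-- Exponents `m n i` of common size `H n → ∞` for which any two monomials eventually have very
different values at the point `invPow b (m n)`. -/
structure IsMahlerScale (l : Filter ι) (c : ℕ) (H : ι → ℕ) (m : ι → σ → ℕ) : Prop where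
  tendsto_atTop : Tendsto H l atTop
  le : ∀ n i, H n ≤ m n i
  le_mul : ∀ n i, m n i ≤ c * H n
  independent : ∀ γ γ' : σ →₀ ℕ, γ ≠ γ' →
    Tendsto (fun n => |(Finsupp.weight (m n) γ : ℤ) - Finsupp.weight (m n) γ'|) l atTop

lemma IsMahlerScale.eventually_le_abs_sub (hm : IsMahlerScale l c H m) (S : Finset (σ →₀ ℕ))
    (T : ℤ) : ∀ᶠ n in l, ∀ γ ∈ S, ∀ γ' ∈ S, γ ≠ γ' →
      T ≤ |(Finsupp.weight (m n) γ : ℤ) - Finsupp.weight (m n) γ'| := by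
  simp only [Filter.eventually_all_finset, Filter.eventually_imp_distrib_left]
  exact fun γ _ γ' _ hne => (hm.independent γ γ' hne).eventually_ge_atTop T

lemma abs_coeff_mul_sub_le_abs_aeval {μ : σ → ℕ} (hb : 1 ≤ b) {G : MvPolynomial σ ℚ}
    {γ₀ : σ →₀ ℕ} {E : ℕ} (hγ₀ : γ₀ ∈ G.support)
    (hE : ∀ γ ∈ G.support, γ ≠ γ₀ → E ≤ Finsupp.weight μ γ) :
    |((G.coeff γ₀ : ℚ) : ℝ)| * (b ^ Finsupp.weight μ γ₀)⁻¹ -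
      (∑ γ ∈ G.support, |((G.coeff γ : ℚ) : ℝ)|) * (b ^ E)⁻¹ ≤
      |MvPolynomial.aeval (invPow b μ) G| := by
  have hrest : |∑ γ ∈ G.support.erase γ₀, ((G.coeff γ : ℚ) : ℝ) * (b ^ Finsupp.weight μ γ)⁻¹| ≤
      (∑ γ ∈ G.support, |((G.coeff γ : ℚ) : ℝ)|) * (b ^ E)⁻¹ := by
    calc |∑ γ ∈ G.support.erase γ₀, ((G.coeff γ : ℚ) : ℝ) * (b ^ Finsupp.weight μ γ)⁻¹|
        ≤ ∑ γ ∈ G.support.erase γ₀, |((G.coeff γ : ℚ) : ℝ)| * (b ^ E)⁻¹ := by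
          refine (Finset.abs_sum_le_sum_abs _ _).trans (Finset.sum_le_sum fun γ hγ => ?_)
          rw [abs_mul, abs_of_nonneg (a := (b ^ _)⁻¹) (by positivity)]
          gcongr
          exact hE γ (Finset.mem_of_mem_erase hγ) (Finset.ne_of_mem_erase hγ)
      _ ≤ ∑ γ ∈ G.support, |((G.coeff γ : ℚ) : ℝ)| * (b ^ E)⁻¹ :=
          Finset.sum_le_sum_of_subset_of_nonneg (Finset.erase_subset _ _)
            fun γ _ _ => by positivity
      _ = _ := (Finset.sum_mul _ _ _).symm
  have hsplit := Finset.add_sum_erase G.support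
    (fun γ => ((G.coeff γ : ℚ) : ℝ) * (b ^ Finsupp.weight μ γ)⁻¹) hγ₀
  have htri := abs_sub_abs_le_abs_sub
    (((G.coeff γ₀ : ℚ) : ℝ) * (b ^ Finsupp.weight μ γ₀)⁻¹)
    (-∑ γ ∈ G.support.erase γ₀, ((G.coeff γ : ℚ) : ℝ) * (b ^ Finsupp.weight μ γ)⁻¹)
  rw [abs_neg, sub_neg_eq_add, hsplit, abs_mul, abs_of_nonneg (a := (b ^ _)⁻¹) (by positivity),
    ← aeval_invPow] at htri
  linarith

lemma IsMahlerScale.exists_eventually_le_abs_aeval (hm : IsMahlerScale l c H m) (hb : 1 < b)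
    {G : MvPolynomial σ ℚ} (hG : G ≠ 0) :
    ∃ δ : ℝ, 0 < δ ∧ ∀ᶠ n in l, ∀ γ ∈ G.support,
      δ * (b ^ Finsupp.weight (m n) γ)⁻¹ ≤ |MvPolynomial.aeval (invPow b (m n)) G| := by
  obtain ⟨γ₁, hγ₁, hmin⟩ := G.support.exists_min_image (fun γ => |((G.coeff γ : ℚ) : ℝ)|)
    (MvPolynomial.support_nonempty.2 hG)
  set a := |((G.coeff γ₁ : ℚ) : ℝ)|
  set L := ∑ γ ∈ G.support, |((G.coeff γ : ℚ) : ℝ)|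
  have ha : 0 < a := abs_pos.2 (Rat.cast_ne_zero.2 (MvPolynomial.mem_support_iff.1 hγ₁))
  obtain ⟨T, hT⟩ : ∃ T : ℕ, L * (b ^ T)⁻¹ < a / 2 := by
    have hlim := (tendsto_inv_atTop_zero.comp (tendsto_pow_atTop_atTop_of_one_lt hb)).const_mul L
    rw [mul_zero] at hlim
    exact (hlim.eventually (gt_mem_nhds (half_pos ha))).exists
  refine ⟨a / 2, half_pos ha, (hm.eventually_le_abs_sub G.support T).mono fun n hn γ hγ => ?_⟩
  obtain ⟨γ₀, hγ₀, hlow⟩ := G.support.exists_min_image (Finsupp.weight (m n)) ⟨γ, hγ⟩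
  have hgap (γ') (hγ' : γ' ∈ G.support) (hne : γ' ≠ γ₀) :
      Finsupp.weight (m n) γ₀ + T ≤ Finsupp.weight (m n) γ' := by
    have h₁ := hlow γ' hγ'
    have h₂ := hn γ' hγ' γ₀ hγ₀ hne
    rw [abs_of_nonneg (by omega)] at h₂
    omega
  have hlead : a / 2 ≤ |((G.coeff γ₀ : ℚ) : ℝ)| - L * (b ^ T)⁻¹ := by
    linarith [hmin γ₀ hγ₀]
  calc a / 2 * (b ^ Finsupp.weight (m n) γ)⁻¹
      ≤ (|((G.coeff γ₀ : ℚ) : ℝ)| - L * (b ^ T)⁻¹) * (b ^ Finsupp.weight (m n) γ₀)⁻¹ := by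
        gcongr
        exacts [(half_pos ha).le.trans hlead, hb.le, hlow γ hγ]
    _ = |((G.coeff γ₀ : ℚ) : ℝ)| * (b ^ Finsupp.weight (m n) γ₀)⁻¹ -
          L * (b ^ (Finsupp.weight (m n) γ₀ + T))⁻¹ := by
        rw [pow_add, mul_inv]
        ring
    _ ≤ |MvPolynomial.aeval (invPow b (m n)) G| := abs_coeff_mul_sub_le_abs_aeval hb.le hγ₀ hgap

lemma IsMahlerScale.eventually_mul_inv_pow_lt (hm : IsMahlerScale l c H m) (hb : 1 < b) (C : ℝ)
    {δ : ℝ} (hδ : 0 < δ) : ∀ᶠ n in l, C * (b ^ H n)⁻¹ < δ := by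
  have hlim := ((tendsto_inv_atTop_zero.comp (tendsto_pow_atTop_atTop_of_one_lt hb)).comp
    hm.tendsto_atTop).const_mul C
  rw [mul_zero] at hlim
  exact hlim.eventually (gt_mem_nhds hδ)

lemma HasExpansion.eventually_ne_zero (hm : IsMahlerScale l c H m) (hb : 1 < b)
    (hy : HasExpansion l b H m y f) (hf : f ≠ 0) : ∀ᶠ n in l, y n ≠ 0 := by
  obtain ⟨γ, hγ⟩ : ∃ γ, MvPowerSeries.coeff γ f ≠ 0 := by
    by_contra! h
    exact hf (MvPowerSeries.ext h)
  obtain ⟨G, hord, hG⟩ := hy (γ.degree * c + γ.degree + 1)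
  have hγG : γ ∈ G.support := by
    have hcoeff := MvPowerSeries.coeff_of_lt_order (lt_of_lt_of_le
      (Nat.cast_lt.2 (show γ.degree < γ.degree * c + γ.degree + 1 by omega)) hord)
    rw [map_sub, sub_eq_zero, MvPolynomial.coeff_coe] at hcoeff
    rwa [MvPolynomial.mem_support_iff, ← hcoeff]
  obtain ⟨δ, hδ, hlow⟩ := hm.exists_eventually_le_abs_aeval hb
    (MvPolynomial.support_nonempty.1 ⟨γ, hγG⟩)
  obtain ⟨C, hC0, hC⟩ := hG.exists_pos
  filter_upwards [hlow, hC.bound, hm.eventually_mul_inv_pow_lt hb C hδ] with n hlow hC hsmall hzero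
  have hweight : Finsupp.weight (m n) γ ≤ γ.degree * c * H n := by
    rw [mul_assoc]
    exact weight_le_degree_mul (hm.le_mul n) γ
  have hexp : γ.degree * c * H n + H n ≤ (γ.degree * c + γ.degree + 1) * H n := by
    nlinarith [Nat.zero_le (γ.degree * H n)]
  rw [hzero, zero_sub, norm_neg, Real.norm_eq_abs, Real.norm_of_nonneg (by positivity)] at hC
  refine lt_irrefl |MvPolynomial.aeval (invPow b (m n)) G| ?_
  calc |MvPolynomial.aeval (invPow b (m n)) G|
      ≤ C * (b ^ ((γ.degree * c + γ.degree + 1) * H n))⁻¹ := hC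
    _ ≤ C * (b ^ (γ.degree * c * H n + H n))⁻¹ := by
        gcongr
        exact hb.le
    _ = C * (b ^ H n)⁻¹ * (b ^ (γ.degree * c * H n))⁻¹ := by
        rw [pow_add, mul_inv]
        ring
    _ < δ * (b ^ (γ.degree * c * H n))⁻¹ := by gcongr
    _ ≤ δ * (b ^ Finsupp.weight (m n) γ)⁻¹ := by
        gcongr
        exact hb.le
    _ ≤ |MvPolynomial.aeval (invPow b (m n)) G| := hlow γ hγG

end Scale

section Siegel

lemma exists_mem_span_ne_zero_map_eq_zero {κ K V W : Type*} [Fintype κ] [Field K] [AddCommGroup V]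
    [Module K V] [AddCommGroup W] [Module K W] [FiniteDimensional K W] {v : κ → V}
    (hv : LinearIndependent K v) (φ : V →ₗ[K] W) (hcard : Module.finrank K W < Fintype.card κ) :
    ∃ x ∈ Submodule.span K (Set.range v), x ≠ 0 ∧ φ x = 0 := by
  have := FiniteDimensional.span_of_finite K (Set.finite_range v)
  have hker : LinearMap.ker (φ.domRestrict (Submodule.span K (Set.range v))) ≠ ⊥ :=
    LinearMap.ker_ne_bot_of_finrank_lt (by rwa [finrank_span_eq_card hv])
  obtain ⟨x, hφx, hx⟩ := (Submodule.ne_bot_iff _).1 hker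
  exact ⟨x, x.2, fun h => hx (Subtype.ext h), hφx⟩

variable {σ K : Type*} [Fintype σ] [Field K]

/-- The monomials `z ^ γ * Y ^ j` of `K[z][Y]`, as a basis over `K`. -/
noncomputable def monomialBasis (σ K : Type*) [Field K] :
    Module.Basis ((σ →₀ ℕ) × ℕ) K (Polynomial (MvPolynomial σ K)) :=
  (MvPolynomial.basisMonomials σ K).smulTower (Polynomial.basisMonomials (MvPolynomial σ K))

omit [Fintype σ] in
lemma monomialBasis_apply (γ : σ →₀ ℕ) (j : ℕ) :
    monomialBasis σ K (γ, j) = Polynomial.monomial j (MvPolynomial.monomial γ 1) := by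
  simp [monomialBasis, Polynomial.smul_monomial]

lemma degree_bounds_of_mem_span {T : ℕ} {P : Polynomial (MvPolynomial σ K)}
    (hP : P ∈ Submodule.span K (monomialBasis σ K '' {p | (∀ i, p.1 i ≤ T) ∧ p.2 ≤ T})) :
    P.natDegree ≤ T ∧ ∀ j, (P.coeff j).totalDegree ≤ Fintype.card σ * T := by
  induction hP using Submodule.span_induction with
  | mem _ hx =>
    obtain ⟨⟨γ, k⟩, ⟨hγ, hk⟩, rfl⟩ := hx
    rw [monomialBasis_apply]
    refine ⟨(Polynomial.natDegree_monomial_le _).trans hk, fun j => ?_⟩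
    rw [Polynomial.coeff_monomial]
    split_ifs
    · rw [MvPolynomial.totalDegree_monomial _ one_ne_zero, Finsupp.sum_fintype _ _ fun _ => rfl]
      exact (Finset.sum_le_card_nsmul _ _ _ fun i _ => hγ i).trans_eq (by simp)
    · simp
  | zero => simp
  | add P Q _ _ hP hQ =>
    refine ⟨Polynomial.natDegree_add_le_of_degree_le hP.1 hQ.1, fun j => ?_⟩
    rw [Polynomial.coeff_add]
    exact (MvPolynomial.totalDegree_add _ _).trans (max_le (hP.2 j) (hQ.2 j))
  | smul a P _ hP =>
    refine ⟨(Polynomial.natDegree_smul_le a P).trans hP.1, fun j => ?_⟩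
    rw [Polynomial.coeff_smul]
    exact (MvPolynomial.totalDegree_smul_le a _).trans (hP.2 j)

lemma exists_ne_zero_le_order_aeval (f : MvPowerSeries σ K) {T M : ℕ}
    (hTM : M ^ Fintype.card σ < T ^ (Fintype.card σ + 1)) :
    ∃ P : Polynomial (MvPolynomial σ K), P ≠ 0 ∧ P.natDegree ≤ T ∧
      (∀ j, (P.coeff j).totalDegree ≤ Fintype.card σ * T) ∧ M ≤ (Polynomial.aeval f P).order := by
  let e : (σ → Fin T) × Fin T → (σ →₀ ℕ) × ℕ :=
    Prod.map (fun α => Finsupp.equivFunOnFinite.symm fun i => (α i : ℕ)) Fin.val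
  have he : Function.Injective e := by
    refine Function.Injective.prodMap (fun α α' h => funext fun i => Fin.ext ?_) Fin.val_injective
    exact DFunLike.congr_fun h i
  let φ : Polynomial (MvPolynomial σ K) →ₗ[K] (σ → Fin M) → K := LinearMap.pi fun β =>
    MvPowerSeries.coeff (Finsupp.equivFunOnFinite.symm fun i => (β i : ℕ)) ∘ₗ
      ((Polynomial.aeval f).toLinearMap.restrictScalars K)
  obtain ⟨P, hPe, hP, hφP⟩ := exists_mem_span_ne_zero_map_eq_zero
    ((monomialBasis σ K).linearIndependent.comp e he) φ (by simpa [pow_succ] using hTM)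
  have hspan : P ∈ Submodule.span K
      (monomialBasis σ K '' {p | (∀ i, p.1 i ≤ T) ∧ p.2 ≤ T}) := by
    refine Submodule.span_mono ?_ hPe
    rintro _ ⟨⟨α, j⟩, rfl⟩
    exact ⟨_, ⟨fun i => (α i).2.le, j.2.le⟩, rfl⟩
  refine ⟨P, hP, (degree_bounds_of_mem_span hspan).1,
    (degree_bounds_of_mem_span hspan).2, MvPowerSeries.nat_le_order fun γ hγ => ?_⟩
  have hγM (i : σ) : γ i < M := (Finsupp.le_degree i γ).trans_lt hγ
  have hzero := congrFun hφP fun i => ⟨γ i, hγM i⟩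
  have hγ_eq : (Finsupp.equivFunOnFinite.symm fun i => γ i) = γ := Finsupp.ext fun i => rfl
  exact hγ_eq ▸ hzero

end Siegel

section Mahler

variable {ι σ : Type*} {l : Filter ι} {x : ℝ} {q c : ℕ} {H : ι → ℕ} {m : ι → σ → ℕ} {y : ι → ℝ}
  {f : MvPowerSeries σ ℚ}

lemma HasExpansion.exists_eventually_evalAt_eq_zero (hx : IsAlgebraic ℚ x) (hq : 2 ≤ q)
    (hm : IsMahlerScale l c H m) (hxy : ∀ᶠ n in l, AffineRelated (q ^ (c * H n)) x (y n))
    (hy : HasExpansion l q H m y f) :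
    ∃ c₀ : ℕ, ∀ (P : Polynomial (MvPolynomial σ ℚ)) (J N M : ℕ), P.natDegree ≤ J →
      (∀ j, (P.coeff j).totalDegree ≤ N) → c₀ * (N + J) < M → M ≤ (Polynomial.aeval f P).order →
      ∀ᶠ n in l, evalAt (invPow q (m n)) (y n) P = 0 := by
  obtain ⟨c₀, hc₀⟩ := exists_le_abs_evalAt_mul (σ := σ) hx (by omega : q ≠ 0) c
  refine ⟨c₀, fun P J N M hJ hN hM hord => ?_⟩
  have hq1 : (1 : ℝ) < q := by exact_mod_cast hq
  obtain ⟨C, hC, hlow⟩ := hc₀ P J N hJ hN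
  obtain ⟨B, hB0, hB⟩ :=
    ((hy.polynomialEval hq1.le P).isBigO_of_le_order hq1.le hm.le hord).exists_pos
  have hsmall := hm.eventually_mul_inv_pow_lt hq1 B hC
  filter_upwards [hB.bound, hxy, hsmall] with n hB hxy hsmall
  by_contra hne
  have hexp : c₀ * (N + J) * H n + H n ≤ M * H n := by nlinarith
  rw [Real.norm_eq_abs, Real.norm_of_nonneg (by positivity)] at hB
  refine lt_irrefl C ?_
  calc C ≤ |evalAt (invPow q (m n)) (y n) P| * q ^ (c₀ * (N + J) * H n) :=
        hlow (H n) (m n) (y n) (hm.le_mul n) hxy hne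
    _ ≤ B * ((q : ℝ) ^ (c₀ * (N + J) * H n + H n))⁻¹ * q ^ (c₀ * (N + J) * H n) := by
        gcongr
        refine hB.trans ?_
        gcongr
        exact hq1.le
    _ = B * ((q : ℝ) ^ H n)⁻¹ := by
        rw [pow_add]
        field_simp
    _ < C := hsmall

theorem HasExpansion.isAlgebraic [Finite σ] [l.NeBot] (hx : IsAlgebraic ℚ x) (hq : 2 ≤ q)
    (hm : IsMahlerScale l c H m) (hxy : ∀ᶠ n in l, AffineRelated (q ^ (c * H n)) x (y n))
    (hy : HasExpansion l q H m y f) : IsAlgebraic (MvPolynomial σ ℚ) f := by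
  have := Fintype.ofFinite σ
  have hq1 : (1 : ℝ) < q := by exact_mod_cast hq
  obtain ⟨c₀, hc₀⟩ := hy.exists_eventually_evalAt_eq_zero hx hq hm hxy
  set r := Fintype.card σ
  set b := c₀ * (r + 1) + 1
  set T := b ^ r + 1
  have hcount : (b * T) ^ r < T ^ (r + 1) := by
    rw [mul_pow, pow_succ, mul_comm]
    exact Nat.mul_lt_mul_of_pos_left (Nat.lt_succ_self _) (by positivity)
  obtain ⟨P, hP, hdeg, hcoeff, hord⟩ := exists_ne_zero_le_order_aeval f hcount
  have hM : c₀ * (r * T + T) < b * T := by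
    have : 0 < T := Nat.succ_pos _
    simp only [b]
    nlinarith
  refine ⟨P, hP, ?_⟩
  by_contra hne
  obtain ⟨n, hzero, hnonzero⟩ := ((hc₀ P T (r * T) (b * T) hdeg hcoeff hM hord).and
    ((hy.polynomialEval hq1.le P).eventually_ne_zero hm hq1 hne)).exists
  exact hnonzero hzero

lemma aeval_invPow_mem_range_ratCast (q : ℕ) (m : σ → ℕ) (G : MvPolynomial σ ℚ) :
    MvPolynomial.aeval (invPow q m) G ∈ (Rat.castHom ℝ).range := by
  rw [aeval_invPow]
  exact sum_mem fun γ _ => ⟨G.coeff γ * ((q : ℚ) ^ Finsupp.weight m γ)⁻¹, by simp⟩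

theorem HasExpansion.not_irrational_of_mul_eq [l.NeBot] (hx : IsAlgebraic ℚ x) (hq : 2 ≤ q)
    (hm : IsMahlerScale l c H m) (hxy : ∀ᶠ n in l, AffineRelated (q ^ (c * H n)) x (y n))
    (hy : HasExpansion l q H m y f) {D N : MvPolynomial σ ℚ} (hD : D ≠ 0)
    (hDN : (D : MvPowerSeries σ ℚ) * f = N) : ¬ Irrational x := by
  intro hirr
  have hq1 : (1 : ℝ) < q := by exact_mod_cast hq
  obtain ⟨c₀, hc₀⟩ := hy.exists_eventually_evalAt_eq_zero hx hq hm hxy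
  set P : Polynomial (MvPolynomial σ ℚ) := .C D * .X - .C N
  have hP : Polynomial.aeval f P = 0 := by
    simp [P, hDN, MvPowerSeries.algebraMap_apply']
  have hvanish := hc₀ P _ (P.support.sup fun j => (P.coeff j).totalDegree) _ le_rfl (fun j => by
    by_cases hj : j ∈ P.support
    · exact Finset.le_sup (f := fun j => (P.coeff j).totalDegree) hj
    · simp [Polynomial.notMem_support_iff.1 hj]) (Nat.lt_succ_self _) (by simp [hP])
  have hDne := (hasExpansion_aeval (l := l) (b := q) (H := H) (m := m) D).eventually_ne_zero hm hq1
    (by simpa using hD)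
  obtain ⟨n, hPn, hDn, hxyn⟩ := (hvanish.and (hDne.and hxy)).exists
  obtain ⟨s, hs⟩ := aeval_invPow_mem_range_ratCast q (m n) D
  obtain ⟨t, ht⟩ := aeval_invPow_mem_range_ratCast q (m n) N
  have hlin : MvPolynomial.aeval (invPow q (m n)) D * y n =
      MvPolynomial.aeval (invPow q (m n)) N := by
    simpa [P, evalAt, sub_eq_zero] using hPn
  refine hxyn.irrational hirr ⟨t / s, ?_⟩
  rw [eq_div_of_mul_eq hDn ((mul_comm _ _).trans hlin), ← hs, ← ht]
  simp

end Mahler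

section Derivation

open Polynomial

variable {k A R : Type*} [CommRing k] [CommRing A] [CommRing R] [Algebra k A] [Algebra k R]
  [Algebra A R] {dA : Derivation k A A} {dR : Derivation k R R}

lemma exists_derivation_aeval_eq (hd : ∀ a, algebraMap A R (dA a) = dR (algebraMap A R a)) (g : R)
    (P : A[X]) : ∃ Q : A[X], dR (aeval g P) = aeval g Q + aeval g (derivative P) * dR g := by
  induction P using Polynomial.induction_on' with
  | add P₁ P₂ h₁ h₂ =>
    obtain ⟨Q₁, h₁⟩ := h₁
    obtain ⟨Q₂, h₂⟩ := h₂
    refine ⟨Q₁ + Q₂, ?_⟩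
    simp only [map_add, h₁, h₂]
    ring
  | monomial n a =>
    refine ⟨monomial n (dA a), ?_⟩
    simp only [aeval_monomial, Derivation.leibniz, Derivation.leibniz_pow, hd, derivative_monomial,
      smul_eq_mul, nsmul_eq_mul, map_mul, map_natCast]
    ring

lemma exists_aeval_eq_zero_and_aeval_derivative_ne_zero [IsDomain A] [CharZero A]
    [FaithfulSMul A R] {g : R} (hg : IsAlgebraic A g) :
    ∃ P : A[X], aeval g P = 0 ∧ aeval g (derivative P) ≠ 0 := by
  obtain ⟨P, hP0, hP⟩ := hg
  induction hn : P.natDegree using Nat.strong_induction_on generalizing P with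
  | _ n ih =>
    by_cases hder : aeval g (derivative P) = 0
    · have hdeg : P.natDegree ≠ 0 := by
        intro h
        rw [eq_C_of_natDegree_eq_zero h] at hP0 hP
        rw [aeval_C, FaithfulSMul.algebraMap_eq_zero_iff] at hP
        exact hP0 (by rw [hP, C_0])
      exact ih _ (hn ▸ natDegree_derivative_lt hdeg) _ (mt derivative_eq_zero.1 hdeg) hder rfl
    · exact ⟨P, hP, hder⟩

variable [IsDomain A] [CharZero A] [IsDomain R] [FaithfulSMul A R]
  {K L : Type*} [Field K] [Field L] [Algebra A K] [IsFractionRing A K] [Algebra R L]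
  [IsFractionRing R L] [Algebra K L] [Algebra A L] [IsScalarTower A K L] [IsScalarTower A R L]

omit [IsDomain R] in
lemma algebraMap_derivation_mem (hd : ∀ a, algebraMap A R (dA a) = dR (algebraMap A R a))
    (F : IntermediateField K L) [Algebra.IsAlgebraic K F] {g : R} (hg : algebraMap R L g ∈ F) :
    algebraMap R L (dR g) ∈ F := by
  have hinj : Function.Injective (algebraMap R L) := IsFractionRing.injective R L
  have hg_alg : IsAlgebraic A g := by
    rw [← isAlgebraic_algebraMap_iff hinj, IsFractionRing.isAlgebraic_iff A K L]
    exact (Algebra.IsAlgebraic.isAlgebraic (⟨_, hg⟩ : F)).algebraMap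
  have hmem (S : A[X]) : algebraMap R L (aeval g S) ∈ F := by
    rw [← aeval_algebraMap_apply, aeval_eq_sum_range]
    refine sum_mem fun i _ => ?_
    rw [← algebraMap_smul K (S.coeff i)]
    exact F.smul_mem (pow_mem hg i)
  obtain ⟨P, hP, hP'⟩ := exists_aeval_eq_zero_and_aeval_derivative_ne_zero hg_alg
  obtain ⟨Q, hQ⟩ := exists_derivation_aeval_eq hd g P
  rw [hP, map_zero] at hQ
  have hdiv : algebraMap R L (dR g) =
      -algebraMap R L (aeval g Q) / algebraMap R L (aeval g (derivative P)) := by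
    rw [eq_div_iff fun h => hP' (hinj (h.trans (map_zero _).symm)), ← map_mul, ← map_neg]
    exact congrArg _ (by linear_combination -hQ)
  rw [hdiv]
  exact div_mem (neg_mem (hmem Q)) (hmem _)

omit K L in
lemma not_linearIndependent_iterate_derivation
    (hd : ∀ a, algebraMap A R (dA a) = dR (algebraMap A R a)) {f : R} (hf : IsAlgebraic A f) :
    ¬ LinearIndependent A fun i : ℕ => dR^[i] f := by
  let K := FractionRing A
  let L := FractionRing R
  let : Algebra K L := FractionRing.liftAlgebra A L
  have : IsScalarTower A K L := FractionRing.isScalarTower_liftAlgebra A L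
  have hinj : Function.Injective (algebraMap R L) := IsFractionRing.injective R L
  let F := IntermediateField.adjoin K {algebraMap R L f}
  have hfK : IsAlgebraic K (algebraMap R L f) := by
    rwa [← IsFractionRing.isAlgebraic_iff A K L, isAlgebraic_algebraMap_iff hinj]
  have : FiniteDimensional K F := IntermediateField.adjoin.finiteDimensional hfK.isIntegral
  have hmem (i : ℕ) : algebraMap R L (dR^[i] f) ∈ F := by
    induction i with
    | zero => exact IntermediateField.mem_adjoin_simple_self K _
    | succ i ih =>
      rw [Function.iterate_succ_apply']
      exact algebraMap_derivation_mem hd F ih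
  intro hli
  have hliL : LinearIndependent K fun i : ℕ => algebraMap R L (dR^[i] f) :=
    (LinearIndependent.iff_fractionRing A K).1 <|
      hli.map' (IsScalarTower.toAlgHom A R L).toLinearMap (LinearMap.ker_eq_bot.2 hinj)
  have hliF : LinearIndependent K fun i : ℕ => (⟨_, hmem i⟩ : F) :=
    LinearIndependent.of_comp F.val.toLinearMap hliL
  have := hliF.finite
  exact not_finite ℕ

end Derivation

section Euler

variable {σ K : Type*} [CommRing K]

/-- The operator underlying `eulerDerivation`. -/
noncomputable def degreeMul (σ K : Type*) [CommRing K] :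
    MvPowerSeries σ K →ₗ[K] MvPowerSeries σ K where
  toFun f := fun γ => γ.degree * MvPowerSeries.coeff γ f
  map_add' _ _ := MvPowerSeries.ext fun _ => mul_add _ _ _
  map_smul' _ _ := MvPowerSeries.ext fun _ => mul_left_comm _ _ _

lemma coeff_degreeMul (f : MvPowerSeries σ K) (γ : σ →₀ ℕ) :
    MvPowerSeries.coeff γ (degreeMul σ K f) = γ.degree * MvPowerSeries.coeff γ f :=
  rfl

/-- The Euler derivation `f ↦ ∑ i, X i * ∂f/∂X i` on power series, which multiplies the coefficient
of a monomial by its degree. -/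
noncomputable def eulerDerivation (σ K : Type*) [CommRing K] :
    Derivation K (MvPowerSeries σ K) (MvPowerSeries σ K) :=
  Derivation.mk' (degreeMul σ K) fun f g => MvPowerSeries.ext fun γ => by
    rw [coeff_degreeMul, smul_eq_mul, smul_eq_mul, map_add, mul_comm g, MvPowerSeries.coeff_mul,
      MvPowerSeries.coeff_mul, MvPowerSeries.coeff_mul, Finset.mul_sum, ← Finset.sum_add_distrib]
    refine Finset.sum_congr rfl fun p hp => ?_
    rw [coeff_degreeMul, coeff_degreeMul, ← Finset.HasAntidiagonal.mem_antidiagonal.1 hp, map_add,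
      Nat.cast_add]
    ring

lemma coeff_eulerDerivation (f : MvPowerSeries σ K) (γ : σ →₀ ℕ) :
    MvPowerSeries.coeff γ (eulerDerivation σ K f) = γ.degree * MvPowerSeries.coeff γ f :=
  rfl

lemma coeff_iterate_eulerDerivation (f : MvPowerSeries σ K) (γ : σ →₀ ℕ) (i : ℕ) :
    MvPowerSeries.coeff γ ((eulerDerivation σ K)^[i] f) =
      (γ.degree : K) ^ i * MvPowerSeries.coeff γ f := by
  induction i with
  | zero => simp
  | succ i ih =>
    rw [Function.iterate_succ_apply', coeff_eulerDerivation, ih]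
    ring

lemma algebraMap_mkDerivation_X (p : MvPolynomial σ K) :
    algebraMap (MvPolynomial σ K) (MvPowerSeries σ K)
      (MvPolynomial.mkDerivation K MvPolynomial.X p) =
    eulerDerivation σ K (algebraMap (MvPolynomial σ K) (MvPowerSeries σ K) p) := by
  have hder : (Algebra.linearMap (MvPolynomial σ K) (MvPowerSeries σ K)).compDer
      (MvPolynomial.mkDerivation K MvPolynomial.X) =
      (eulerDerivation σ K).compAlgebraMap (MvPolynomial σ K) :=
    MvPolynomial.derivation_ext fun i => MvPowerSeries.ext fun γ => by
      suffices h : (if γ = Finsupp.single i 1 then 1 else 0 : K) =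
          if γ = Finsupp.single i 1 then (γ.degree : K) else 0 by
        simpa [coeff_eulerDerivation, MvPowerSeries.algebraMap_apply',
          MvPowerSeries.coeff_X] using h
      split_ifs with hγ <;> simp [hγ]
  exact DFunLike.congr_fun hder p

lemma not_linearIndependent_iterate_eulerDerivation [IsDomain K] [CharZero K]
    {f : MvPowerSeries σ K} (hf : IsAlgebraic (MvPolynomial σ K) f) :
    ¬ LinearIndependent (MvPolynomial σ K) fun i : ℕ => (eulerDerivation σ K)^[i] f := by
  have : IsDomain (MvPowerSeries σ K) := NoZeroDivisors.to_isDomain _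
  have : FaithfulSMul (MvPolynomial σ K) (MvPowerSeries σ K) :=
    (faithfulSMul_iff_algebraMap_injective _ _).2 fun p q h => MvPolynomial.coe_injective σ K <| by
      simpa [MvPowerSeries.algebraMap_apply'] using h
  exact not_linearIndependent_iterate_derivation (fun p => algebraMap_mkDerivation_X p) hf

end Euler

section Patterns

variable {σ K : Type*} [CommRing K]

/-- The coefficients of `f` lying below the exponent `γ`, read backwards from `γ`. -/
noncomputable def window (f : MvPowerSeries σ K) (γ β : σ →₀ ℕ) : K :=
  if β ≤ γ then MvPowerSeries.coeff (γ - β) f else 0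

/-- Up to scaling, only finitely many blocks of coefficients of any given size occur in `f`: the
analogue for power series of a sequence having finitely many factors of each length. -/
def HasFinitelyManyPatterns (f : MvPowerSeries σ K) : Prop :=
  ∀ R : ℕ, ∃ S : Set ((σ →₀ ℕ) → K), S.Finite ∧
    ∀ γ, ∃ c, ∃ φ ∈ S, ∀ β, β.degree ≤ R → window f γ β = c * φ β

/-- If `∑ i ∈ s, B i • θ^i f = 0`, where `θ` is the Euler derivation, then the degrees of the
exponents around which the coefficients of `f` form the pattern `φ` are roots of this polynomial. -/
noncomputable def patternPolynomial (s : Finset ℕ) (B : ℕ → MvPolynomial σ K)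
    (φ : (σ →₀ ℕ) → K) : Polynomial K :=
  ∑ i ∈ s, ∑ β ∈ (B i).support,
    Polynomial.C ((B i).coeff β * φ β) * (Polynomial.X - Polynomial.C (β.degree : K)) ^ i

lemma coeff_coe_mul (B : MvPolynomial σ K) (f : MvPowerSeries σ K) (γ : σ →₀ ℕ) :
    MvPowerSeries.coeff γ ((B : MvPowerSeries σ K) * f) =
      ∑ β ∈ B.support, B.coeff β * window f γ β := by
  conv_lhs => rw [MvPolynomial.as_sum B]
  rw [← MvPolynomial.coeToMvPowerSeries.ringHom_apply, map_sum, Finset.sum_mul, map_sum]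
  refine Finset.sum_congr rfl fun β _ => ?_
  rw [MvPolynomial.coeToMvPowerSeries.ringHom_apply, MvPolynomial.coe_monomial,
    MvPowerSeries.coeff_monomial_mul, window, mul_ite, mul_zero]

lemma window_iterate_eulerDerivation (f : MvPowerSeries σ K) (i : ℕ) (γ β : σ →₀ ℕ) :
    window ((eulerDerivation σ K)^[i] f) γ β =
      ((γ.degree : K) - β.degree) ^ i * window f γ β := by
  unfold window
  split_ifs with hβ
  · have hdeg : γ.degree = (γ - β).degree + β.degree := by
      rw [← map_add, tsub_add_cancel_of_le hβ]
    rw [coeff_iterate_eulerDerivation, hdeg, Nat.cast_add, add_sub_cancel_right]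
  · rw [mul_zero]

variable (s : Finset ℕ) (B : ℕ → MvPolynomial σ K)

lemma eval_patternPolynomial_window (f : MvPowerSeries σ K) (γ : σ →₀ ℕ) :
    (patternPolynomial s B (window f γ)).eval (γ.degree : K) =
      MvPowerSeries.coeff γ (∑ i ∈ s, B i • (eulerDerivation σ K)^[i] f) := by
  rw [map_sum, patternPolynomial, Polynomial.eval_finsetSum]
  refine Finset.sum_congr rfl fun i _ => ?_
  rw [Algebra.smul_def, MvPowerSeries.algebraMap_apply', Algebra.algebraMap_self,
    MvPowerSeries.map_id, RingHom.id_apply, coeff_coe_mul, Polynomial.eval_finsetSum]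
  refine Finset.sum_congr rfl fun β _ => ?_
  rw [window_iterate_eulerDerivation, Polynomial.eval_mul, Polynomial.eval_pow,
    Polynomial.eval_sub, Polynomial.eval_X, Polynomial.eval_C, Polynomial.eval_C]
  ring

variable {s B}

lemma patternPolynomial_eq_C_mul {φ ψ : (σ →₀ ℕ) → K} {c : K}
    (h : ∀ i ∈ s, ∀ β ∈ (B i).support, φ β = c * ψ β) :
    patternPolynomial s B φ = Polynomial.C c * patternPolynomial s B ψ := by
  simp only [patternPolynomial, Finset.mul_sum]
  refine Finset.sum_congr rfl fun i hi => Finset.sum_congr rfl fun β hβ => ?_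
  rw [h i hi β hβ, mul_left_comm, Polynomial.C_mul, mul_assoc]

lemma coeff_patternPolynomial {i₀ : ℕ} (hi₀ : i₀ ∈ s) (hmax : ∀ i ∈ s, i₀ < i → B i = 0)
    (φ : (σ →₀ ℕ) → K) :
    (patternPolynomial s B φ).coeff i₀ = ∑ β ∈ (B i₀).support, (B i₀).coeff β * φ β := by
  nontriviality K
  simp only [patternPolynomial, Polynomial.finsetSum_coeff, Polynomial.coeff_C_mul]
  rw [Finset.sum_eq_single_of_mem i₀ hi₀]
  · refine Finset.sum_congr rfl fun β _ => ?_
    have hlead := ((Polynomial.monic_X_sub_C (β.degree : K)).pow i₀).coeff_natDegree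
    rw [(Polynomial.monic_X_sub_C _).natDegree_pow, Polynomial.natDegree_X_sub_C, mul_one] at hlead
    rw [hlead, mul_one]
  · intro i hi hne
    rcases lt_or_gt_of_ne hne with hlt | hgt
    · refine Finset.sum_eq_zero fun β _ => ?_
      rw [Polynomial.coeff_eq_zero_of_natDegree_lt, mul_zero]
      rwa [(Polynomial.monic_X_sub_C _).natDegree_pow, Polynomial.natDegree_X_sub_C, mul_one]
    · rw [hmax i hi hgt, MvPolynomial.support_zero, Finset.sum_empty]

lemma exists_coe_eq_of_finite {f : MvPowerSeries σ K}
    (hf : {γ | MvPowerSeries.coeff γ f ≠ 0}.Finite) :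
    ∃ p : MvPolynomial σ K, (p : MvPowerSeries σ K) = f := by
  refine ⟨∑ γ ∈ hf.toFinset, MvPolynomial.monomial γ (MvPowerSeries.coeff γ f), ?_⟩
  ext γ
  simp +contextual [MvPolynomial.coeff_sum, MvPolynomial.coeff_monomial]

variable [IsDomain K] [CharZero K]

lemma HasFinitelyManyPatterns.finite_setOf_coeff_coe_mul_ne_zero [Finite σ]
    {f : MvPowerSeries σ K} (hf : HasFinitelyManyPatterns f)
    (hB : ∑ i ∈ s, B i • (eulerDerivation σ K)^[i] f = 0) {i₀ : ℕ} (hi₀ : i₀ ∈ s)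
    (hmax : ∀ i ∈ s, i₀ < i → B i = 0) :
    {γ | MvPowerSeries.coeff γ ((B i₀ : MvPowerSeries σ K) * f) ≠ 0}.Finite := by
  obtain ⟨S, hS, hpat⟩ := hf (s.sup fun i => (B i).totalDegree)
  have hdeg {i : ℕ} (hi : i ∈ s) {β : σ →₀ ℕ} (hβ : β ∈ (B i).support) :
      β.degree ≤ s.sup fun i => (B i).totalDegree :=
    (MvPolynomial.le_totalDegree hβ).trans (Finset.le_sup (f := fun i => (B i).totalDegree) hi)
  have hroots : {t : K | ∃ φ ∈ S, patternPolynomial s B φ ≠ 0 ∧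
      (patternPolynomial s B φ).IsRoot t}.Finite := by
    refine (hS.biUnion fun φ _ => ?_).subset fun t ⟨φ, hφ, h⟩ => Set.mem_biUnion hφ h
    by_cases h0 : patternPolynomial s B φ = 0
    · exact Set.finite_empty.subset fun t ht => ht.1 h0
    · exact (Polynomial.finite_setOfPred_isRoot h0).subset fun t ht => ht.2
  obtain ⟨M, hM⟩ := (hroots.preimage (f := fun n : ℕ => (n : K)) Nat.cast_injective.injOn).bddAbove
  refine (Finsupp.finite_of_degree_le M).subset fun γ hγ => hM ?_
  obtain ⟨c, φ, hφ, hc⟩ := hpat γ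
  have hC := patternPolynomial_eq_C_mul fun i hi β hβ => hc β (hdeg hi hβ)
  have hne : Polynomial.C c * patternPolynomial s B φ ≠ 0 := by
    rw [← hC]
    intro h
    exact hγ (by rw [coeff_coe_mul, ← coeff_patternPolynomial hi₀ hmax, h, Polynomial.coeff_zero])
  have heval := eval_patternPolynomial_window s B f γ
  rw [hB, map_zero, hC, Polynomial.eval_mul, Polynomial.eval_C] at heval
  refine ⟨φ, hφ, right_ne_zero_of_mul hne, (mul_eq_zero.1 heval).resolve_left ?_⟩
  exact fun h => left_ne_zero_of_mul hne (by rw [h, Polynomial.C_0])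

theorem HasFinitelyManyPatterns.exists_mul_eq_of_isAlgebraic [Finite σ] {f : MvPowerSeries σ K}
    (hf : HasFinitelyManyPatterns f) (halg : IsAlgebraic (MvPolynomial σ K) f) :
    ∃ D N : MvPolynomial σ K, D ≠ 0 ∧ (D : MvPowerSeries σ K) * f = N := by
  have hdep := not_linearIndependent_iterate_eulerDerivation halg
  rw [not_linearIndependent_iff] at hdep
  obtain ⟨s, B, hB, i, hi, hBi⟩ := hdep
  obtain ⟨i₀, hi₀, hmax⟩ := (s.filter fun i => B i ≠ 0).exists_max_image id
    ⟨i, Finset.mem_filter.2 ⟨hi, hBi⟩⟩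
  rw [Finset.mem_filter] at hi₀
  have hzero (j : ℕ) (hj : j ∈ s) (hlt : i₀ < j) : B j = 0 := by
    by_contra hne
    exact hlt.not_ge (hmax j (Finset.mem_filter.2 ⟨hj, hne⟩))
  obtain ⟨N, hN⟩ :=
    exists_coe_eq_of_finite (hf.finite_setOf_coeff_coe_mul_ne_zero hB hi₀.1 hzero)
  exact ⟨B i₀, N, hi₀.2, hN.symm⟩

end Patterns

section Walk

variable {α σ K : Type*} [CommRing K]

/-- The position after `k` steps of the walk following the word `w`, each letter `a` of which is a
step by `e a`. -/
noncomputable def walkPos (e : α → σ →₀ ℕ) (w : ℕ → α) (k : ℕ) : σ →₀ ℕ :=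
  ∑ l ∈ Finset.range k, e (w l)

/-- The product of the weights of the first `k` letters of the word `w`. -/
def walkWeight (ρ : α → K) (w : ℕ → α) (k : ℕ) : K :=
  ∏ l ∈ Finset.range k, ρ (w l)

/-- The polynomial `∑ k < n, c (w k) * walkWeight ρ w k * X ^ walkPos e w k`. -/
noncomputable def walkPolynomial (e : α → σ →₀ ℕ) (ρ c : α → K) (w : ℕ → α) (n : ℕ) :
    MvPolynomial σ K :=
  ∑ k ∈ Finset.range n, MvPolynomial.monomial (walkPos e w k) (c (w k) * walkWeight ρ w k)

/-- The power series `∑ k, c (w k) * walkWeight ρ w k * X ^ walkPos e w k`. When no step is zero,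
only the first `γ.degree + 1` terms contribute to the coefficient of `X ^ γ`. -/
noncomputable def walkSeries (e : α → σ →₀ ℕ) (ρ c : α → K) (w : ℕ → α) : MvPowerSeries σ K :=
  fun γ => (walkPolynomial e ρ c w (γ.degree + 1)).coeff γ

variable {e : α → σ →₀ ℕ} (ρ c : α → K) (w : ℕ → α)

lemma walkPos_add (e : α → σ →₀ ℕ) (k l : ℕ) :
    walkPos e w (k + l) = walkPos e w k + walkPos e (fun i => w (k + i)) l :=
  Finset.sum_range_add ..

lemma walkWeight_add (k l : ℕ) :
    walkWeight ρ w (k + l) = walkWeight ρ w k * walkWeight ρ (fun i => w (k + i)) l :=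
  Finset.prod_range_add ..

lemma walkPolynomial_add (e : α → σ →₀ ℕ) (k n : ℕ) :
    walkPolynomial e ρ c w (k + n) = walkPolynomial e ρ c w k +
      MvPolynomial.monomial (walkPos e w k) (walkWeight ρ w k) *
        walkPolynomial e ρ c (fun i => w (k + i)) n := by
  simp only [walkPolynomial, Finset.sum_range_add, Finset.mul_sum, MvPolynomial.monomial_mul,
    walkPos_add, walkWeight_add, mul_left_comm]

variable {w} in
lemma walkPolynomial_congr (e : α → σ →₀ ℕ) {w' : ℕ → α} {n : ℕ} (h : ∀ i < n, w i = w' i) :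
    walkPolynomial e ρ c w n = walkPolynomial e ρ c w' n := by
  refine Finset.sum_congr rfl fun k hk => ?_
  have h' (l : ℕ) (hl : l ∈ Finset.range k) : w l = w' l :=
    h l ((Finset.mem_range.1 hl).trans (Finset.mem_range.1 hk))
  rw [walkPos, walkPos, walkWeight, walkWeight, h k (Finset.mem_range.1 hk),
    Finset.sum_congr rfl fun l hl => congrArg e (h' l hl),
    Finset.prod_congr rfl fun l hl => congrArg ρ (h' l hl)]

variable {ρ c w} in
lemma exists_walkPos_eq_of_coeff_walkPolynomial_ne_zero {n : ℕ} {γ : σ →₀ ℕ}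
    (h : (walkPolynomial e ρ c w n).coeff γ ≠ 0) : ∃ k < n, walkPos e w k = γ := by
  rw [walkPolynomial, MvPolynomial.coeff_sum] at h
  obtain ⟨k, hk, hne⟩ := Finset.exists_ne_zero_of_sum_ne_zero h
  rw [MvPolynomial.coeff_monomial] at hne
  exact ⟨k, Finset.mem_range.1 hk, (ne_eq _ _ ▸ ite_ne_right_iff.1 hne).1⟩

variable {ρ c w} in
lemma exists_walkPos_add_eq_of_window_walkSeries_ne_zero {γ β : σ →₀ ℕ}
    (h : window (walkSeries e ρ c w) γ β ≠ 0) : ∃ k, walkPos e w k + β = γ := by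
  obtain ⟨hβ, hne⟩ := ite_ne_right_iff.1 h
  obtain ⟨k, -, hk⟩ := exists_walkPos_eq_of_coeff_walkPolynomial_ne_zero hne
  exact ⟨k, by rw [hk, tsub_add_cancel_of_le hβ]⟩

variable (he : ∀ a, e a ≠ 0)

include he

lemma le_degree_walkPos (k : ℕ) : k ≤ (walkPos e w k).degree := by
  rw [walkPos, map_sum]
  calc k = ∑ l ∈ Finset.range k, 1 := by simp
    _ ≤ _ := Finset.sum_le_sum fun l _ =>
      Nat.one_le_iff_ne_zero.2 (mt (Finsupp.degree_eq_zero_iff _).1 (he _))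

lemma degree_walkPos_strictMono : StrictMono fun k => (walkPos e w k).degree :=
  strictMono_nat_of_lt_succ fun k => by
    have := le_degree_walkPos (fun i => w (k + i)) he 1
    rw [walkPos_add, map_add]
    lia

lemma coeff_walkSeries {γ : σ →₀ ℕ} {n : ℕ} (hn : γ.degree < n) :
    MvPowerSeries.coeff γ (walkSeries e ρ c w) = (walkPolynomial e ρ c w n).coeff γ := by
  obtain ⟨m, rfl⟩ : ∃ m, n = γ.degree + 1 + m := Nat.exists_eq_add_of_le hn
  change (walkPolynomial e ρ c w (γ.degree + 1)).coeff γ = _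
  rw [walkPolynomial_add ρ c w e (γ.degree + 1) m, MvPolynomial.coeff_add,
    MvPolynomial.coeff_monomial_mul', if_neg, add_zero]
  intro hle
  have := le_degree_walkPos w he (γ.degree + 1)
  have := Finsupp.degree_mono hle
  lia

lemma le_order_walkSeries_sub (n : ℕ) :
    n ≤ (walkSeries e ρ c w - (walkPolynomial e ρ c w n : MvPowerSeries σ K)).order :=
  MvPowerSeries.nat_le_order fun γ hγ => by
    rw [map_sub, coeff_walkSeries ρ c w he hγ, MvPolynomial.coeff_coe, sub_self]

lemma coeff_walkPos_add_walkSeries (k : ℕ) (δ : σ →₀ ℕ) :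
    MvPowerSeries.coeff (walkPos e w k + δ) (walkSeries e ρ c w) =
      walkWeight ρ w k * MvPowerSeries.coeff δ (walkSeries e ρ c fun i => w (k + i)) := by
  have hlow : (walkPolynomial e ρ c w k).coeff (walkPos e w k + δ) = 0 := by
    by_contra hne
    obtain ⟨l, hl, heq⟩ := exists_walkPos_eq_of_coeff_walkPolynomial_ne_zero hne
    have := degree_walkPos_strictMono w he hl
    simp only [heq, map_add] at this
    lia
  have hn : (walkPos e w k + δ).degree < k + ((walkPos e w k + δ).degree + 1) := by lia
  have hn' : δ.degree < (walkPos e w k + δ).degree + 1 := by rw [map_add]; lia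
  rw [coeff_walkSeries ρ c w he hn, coeff_walkSeries ρ c _ he hn', walkPolynomial_add,
    MvPolynomial.coeff_add, hlow, zero_add, MvPolynomial.coeff_monomial_mul]

variable {ρ c w} in
lemma window_walkSeries_walkPos_add {k R : ℕ} {δ β : σ →₀ ℕ} (hδ : δ.degree ≤ R)
    (hk : ∀ l, walkPos e w l + β = walkPos e w k + δ → k ≤ l) :
    window (walkSeries e ρ c w) (walkPos e w k + δ) β =
      walkWeight ρ w k * window (walkSeries e ρ c fun i => w (k + i % (R + 1))) δ β := by
  by_cases hβ : β ≤ δ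
  · have hdeg : (δ - β).degree < R + 1 :=
      Nat.lt_succ_of_le ((Finsupp.degree_mono tsub_le_self).trans hδ)
    rw [window, window, if_pos hβ, if_pos (hβ.trans le_add_self), add_tsub_assoc_of_le hβ,
      coeff_walkPos_add_walkSeries ρ c w he, coeff_walkSeries ρ c _ he hdeg,
      coeff_walkSeries ρ c _ he hdeg]
    exact congrArg (fun p => walkWeight ρ w k * MvPolynomial.coeff (δ - β) p)
      (walkPolynomial_congr ρ c e fun i hi => by rw [Nat.mod_eq_of_lt hi])
  · rw [window.eq_1 _ δ, if_neg hβ, mul_zero]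
    by_contra hne
    obtain ⟨l, hl⟩ := exists_walkPos_add_eq_of_window_walkSeries_ne_zero hne
    obtain ⟨m, rfl⟩ := Nat.exists_eq_add_of_le (hk l hl)
    rw [walkPos_add, add_assoc] at hl
    exact hβ (add_left_cancel hl ▸ le_add_self)

theorem hasFinitelyManyPatterns_walkSeries [Finite α] [Finite σ] :
    HasFinitelyManyPatterns (walkSeries e ρ c w) := by
  intro R
  refine ⟨insert 0 (Set.image2 (fun δ (v : Fin (R + 1) → α) =>
    window (walkSeries e ρ c fun i => v (Fin.ofNat (R + 1) i)) δ) {δ | δ.degree ≤ R} Set.univ),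
    ((Finsupp.finite_of_degree_le R).image2 _ Set.finite_univ).insert 0, fun γ => ?_⟩
  -- The windows of size `R` at `γ` only see the walk after its first visit `k` to the ball of
  -- degrees `≥ γ.degree - R`, and at most `R + 1` steps of it.
  obtain ⟨k, hkγ, hk⟩ : ∃ k, γ.degree ≤ (walkPos e w k).degree + R ∧
      ∀ l, γ.degree ≤ (walkPos e w l).degree + R → k ≤ l := by
    have hex : ∃ k, γ.degree ≤ (walkPos e w k).degree + R :=
      ⟨γ.degree, (le_degree_walkPos w he _).trans (Nat.le_add_right _ _)⟩
    exact ⟨Nat.find hex, Nat.find_spec hex, fun l => Nat.find_min' hex⟩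
  have hkl {β : σ →₀ ℕ} (hβ : β.degree ≤ R) (l : ℕ) (hl : walkPos e w l + β = γ) : k ≤ l :=
    hk l (by rw [← hl, map_add]; lia)
  by_cases hγ : walkPos e w k ≤ γ
  · obtain ⟨δ, rfl⟩ := exists_add_of_le hγ
    have hδ : δ.degree ≤ R := by rw [map_add] at hkγ; lia
    exact ⟨walkWeight ρ w k, _, Or.inr ⟨δ, hδ, fun i => w (k + i), trivial, rfl⟩,
      fun β hβ => window_walkSeries_walkPos_add he hδ (hkl hβ)⟩
  · refine ⟨1, 0, Or.inl rfl, fun β hβ => ?_⟩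
    rw [Pi.zero_apply, mul_zero]
    by_contra hne
    obtain ⟨l, hl⟩ := exists_walkPos_add_eq_of_window_walkSeries_ne_zero hne
    obtain ⟨m, rfl⟩ := Nat.exists_eq_add_of_le (hkl hβ l hl)
    rw [walkPos_add, add_assoc] at hl
    exact hγ (hl ▸ le_self_add)

end Walk

section Factors

variable {α : Type*} {u : ℕ → α} {n i j k l : ℕ}

/-- The factor of length `n` of the sequence `u` at position `i`. -/
def factor (u : ℕ → α) (n i : ℕ) : Fin n → α :=
  fun t => u (i + t)

/-- The factors of length `n` of `u` at the positions `i` and `j` coincide. -/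
def Agree (u : ℕ → α) (n i j : ℕ) : Prop :=
  ∀ t < n, u (i + t) = u (j + t)

/-- The number of distinct factors of length `n` of `u`. -/
noncomputable def factorComplexity (u : ℕ → α) (n : ℕ) : ℕ :=
  (Set.range (factor u n)).ncard

/-- `u` is not eventually periodic. -/
def IsAperiodic (u : ℕ → α) : Prop :=
  ∀ i j, i < j → ∃ t, u (i + t) ≠ u (j + t)

/-- Every factor of `u` occurs infinitely often. -/
def IsRecurrent (u : ℕ → α) : Prop :=
  ∀ n i k, ∃ j ≥ k, Agree u n i j

lemma factor_eq_factor_iff : factor u n i = factor u n j ↔ Agree u n i j :=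
  ⟨fun h t ht => congrFun h ⟨t, ht⟩, fun h => funext fun t => h t t.2⟩

lemma Agree.symm (h : Agree u n i j) : Agree u n j i :=
  fun t ht => (h t ht).symm

lemma Agree.trans (h : Agree u n i j) (h' : Agree u n j k) : Agree u n i k :=
  fun t ht => (h t ht).trans (h' t ht)

lemma Agree.mono {m : ℕ} (h : Agree u n i j) (hm : m ≤ n) : Agree u m i j :=
  fun t ht => h t (ht.trans_le hm)

lemma Agree.succ (h : Agree u n i j) (h' : u (i + n) = u (j + n)) : Agree u (n + 1) i j := by
  intro t ht
  rcases Nat.lt_succ_iff_lt_or_eq.1 ht with hlt | rfl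
  exacts [h t hlt, h']

lemma Agree.shift (s : ℕ) (h : Agree u (n + s) i j) : Agree u n (i + s) (j + s) := by
  intro t ht
  rw [add_assoc, add_assoc]
  exact h _ (by lia)

lemma Agree.of_shift (h₀ : u i = u j) (h : Agree u n (i + 1) (j + 1)) : Agree u (n + 1) i j := by
  rintro (_ | t) ht
  · exact h₀
  · rw [add_comm t, ← add_assoc, ← add_assoc]
    exact h t (by lia)

lemma IsAperiodic.tail (hu : IsAperiodic u) (k : ℕ) : IsAperiodic fun i => u (k + i) := by
  intro i j hij
  obtain ⟨t, ht⟩ := hu (k + i) (k + j) (by lia)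
  exact ⟨t, by simpa only [← add_assoc] using ht⟩

lemma range_factor_tail_subset (k : ℕ) :
    Set.range (factor (fun i => u (k + i)) n) ⊆ Set.range (factor u n) := by
  rintro _ ⟨i, rfl⟩
  exact ⟨k + i, funext fun t => congrArg u (add_assoc k i t)⟩

lemma image_init_range_factor :
    Fin.init '' Set.range (factor u (n + 1)) = Set.range (factor u n) := by
  rw [← Set.range_comp]
  rfl

lemma eq_or_eq_of_ncard_le_ncard_image_add_one {β γ : Type*} {f : β → γ} {s : Set β}
    (hs : s.Finite) (hf : s.ncard ≤ (f '' s).ncard + 1) {a a' b b' : β} (ha : a ∈ s) (ha' : a' ∈ s)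
    (haa' : a ≠ a') (hfa : f a = f a') (hb : b ∈ s) (hb' : b' ∈ s) (hbb' : b ≠ b')
    (hfb : f b = f b') : b = a ∨ b = a' := by
  by_contra! hne
  have hsub : f '' s ⊆ f '' ((s \ {a}) \ {b}) := by
    rintro _ ⟨z, hz, rfl⟩
    have hza' : a' ∈ (s \ {a}) \ {b} := ⟨⟨ha', haa'.symm⟩, hne.2.symm⟩
    by_cases hza : z = a
    · exact ⟨a', hza', by rw [hza, hfa]⟩
    by_cases hzb : z = b
    · by_cases hba : b' = a
      · exact ⟨a', hza', by rw [hzb, hfb, hba, hfa]⟩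
      · exact ⟨b', ⟨⟨hb', hba⟩, hbb'.symm⟩, by rw [hzb, hfb]⟩
    · exact ⟨z, ⟨⟨hz, hza⟩, hzb⟩, rfl⟩
  have hle := (Set.ncard_le_ncard hsub (hs.sdiff.sdiff.image f)).trans
    (Set.ncard_image_le hs.sdiff.sdiff)
  have hsa := Set.ncard_sdiff_singleton_add_one ha hs
  have hsb := Set.ncard_sdiff_singleton_add_one (s := s \ {a}) ⟨hb, hne.1⟩ hs.sdiff
  lia

section Finite

variable (hu : (Set.range u).Finite)

include hu

lemma finite_range_factor (n : ℕ) : (Set.range (factor u n)).Finite := by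
  refine (Set.Finite.pi fun _ : Fin n => hu).subset ?_
  rintro _ ⟨i, rfl⟩ t _
  exact ⟨_, rfl⟩

lemma finite_range_tail (k : ℕ) : (Set.range fun i => u (k + i)).Finite :=
  hu.subset (Set.range_comp_subset_range (k + ·) u)

lemma exists_agree_of_factorComplexity (n k : ℕ) :
    ∃ i j, k ≤ i ∧ i < j ∧ j ≤ k + factorComplexity u n ∧ Agree u n i j := by
  have hcard : (finite_range_factor hu n).toFinset.card <
      (Finset.Icc k (k + factorComplexity u n)).card := by
    rw [← Set.ncard_eq_toFinset_card _ (finite_range_factor hu n), Nat.card_Icc]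
    change factorComplexity u n < _
    lia
  obtain ⟨i, hi, j, hj, hij, h⟩ := Finset.exists_ne_map_eq_of_card_lt_of_maps_to hcard
    (f := factor u n) (fun i _ => by simp)
  rw [Finset.mem_Icc] at hi hj
  rw [factor_eq_factor_iff] at h
  rcases lt_or_gt_of_ne hij with hlt | hgt
  · exact ⟨i, j, hi.1, hlt, hj.2, h⟩
  · exact ⟨j, i, hj.1, hgt, hi.2, h.symm⟩

lemma factorComplexity_tail_le (n k : ℕ) :
    factorComplexity (fun i => u (k + i)) n ≤ factorComplexity u n :=
  Set.ncard_le_ncard (range_factor_tail_subset k) (finite_range_factor hu n)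

lemma agree_succ_or_agree_succ (hn : factorComplexity u (n + 1) ≤ factorComplexity u n + 1)
    (hij : Agree u n i j) (hij' : u (i + n) ≠ u (j + n)) (hkl : Agree u n k l)
    (hkl' : u (k + n) ≠ u (l + n)) : Agree u (n + 1) k i ∨ Agree u (n + 1) k j := by
  have hne {i j : ℕ} (h : u (i + n) ≠ u (j + n)) : factor u (n + 1) i ≠ factor u (n + 1) j :=
    fun heq => h (factor_eq_factor_iff.1 heq n n.lt_succ_self)
  rw [← factor_eq_factor_iff] at hij hkl
  rw [← factor_eq_factor_iff, ← factor_eq_factor_iff]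
  refine eq_or_eq_of_ncard_le_ncard_image_add_one (f := Fin.init)
    (finite_range_factor hu (n + 1)) ?_ ⟨i, rfl⟩ ⟨j, rfl⟩ (hne hij') hij ⟨k, rfl⟩ ⟨l, rfl⟩
    (hne hkl') hkl
  rwa [image_init_range_factor]

lemma factorComplexity_lt_succ (hap : IsAperiodic u) (n : ℕ) :
    factorComplexity u n < factorComplexity u (n + 1) := by
  by_contra! hle
  have hinj : Set.InjOn Fin.init (Set.range (factor u (n + 1))) := by
    refine Set.injOn_of_ncard_image_eq ?_ (finite_range_factor hu (n + 1))
    refine le_antisymm (Set.ncard_image_le (finite_range_factor hu (n + 1))) ?_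
    rwa [image_init_range_factor]
  have hsucc (i j : ℕ) (h : Agree u n i j) : Agree u (n + 1) i j :=
    factor_eq_factor_iff.1 (hinj ⟨i, rfl⟩ ⟨j, rfl⟩ (factor_eq_factor_iff.2 h))
  obtain ⟨i, j, -, hij, -, h⟩ := exists_agree_of_factorComplexity hu n 0
  have hshift (s : ℕ) : Agree u n (i + s) (j + s) := by
    induction s with
    | zero => exact h
    | succ s ih => exact (hsucc _ _ ih).shift 1
  obtain ⟨t, ht⟩ := hap i j hij
  exact ht (hsucc _ _ (hshift t) 0 n.succ_pos)

lemma factorComplexity_add_le (hap : IsAperiodic u) (n k : ℕ) :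
    factorComplexity u n + k ≤ factorComplexity u (n + k) := by
  induction k with
  | zero => exact le_rfl
  | succ k ih =>
    have := factorComplexity_lt_succ hu hap (n + k)
    lia

lemma exists_tail_minimal_factorComplexity (hap : IsAperiodic u) {C : ℕ}
    (hC : ∃ᶠ n in atTop, factorComplexity u n ≤ n + C) :
    ∃ k₀ C₀, (∀ n, factorComplexity (fun i => u (k₀ + i)) n ≤ n + C₀) ∧
      ∀ k, ∀ᶠ n in atTop, n + C₀ ≤ factorComplexity (fun i => u (k + i)) n := by
  have hex : ∃ C₀ k, ∀ n, factorComplexity (fun i => u (k + i)) n ≤ n + C₀ := by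
    refine ⟨C, 0, fun n => ?_⟩
    obtain ⟨m, hm, hle⟩ := frequently_atTop.1 hC n
    have hadd := factorComplexity_add_le hu hap n (m - n)
    have htail := factorComplexity_tail_le hu n 0
    rw [Nat.add_sub_cancel' hm] at hadd
    lia
  obtain ⟨k₀, hk₀⟩ := Nat.find_spec hex
  refine ⟨k₀, Nat.find hex, hk₀, fun k => ?_⟩
  obtain ⟨n₀, hn₀⟩ : ∃ n₀, n₀ + Nat.find hex ≤ factorComplexity (fun i => u (k + i)) n₀ := by
    rcases Nat.eq_zero_or_pos (Nat.find hex) with hzero | hpos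
    · exact ⟨0, by rw [hzero]; exact Nat.zero_le _⟩
    · have hmin := Nat.find_min hex (Nat.sub_lt hpos one_pos)
      push Not at hmin
      obtain ⟨n₀, hn₀⟩ := hmin k
      exact ⟨n₀, by lia⟩
  filter_upwards [eventually_ge_atTop n₀] with n hn
  have hadd := factorComplexity_add_le (finite_range_tail hu k) (hap.tail k) n₀ (n - n₀)
  rw [Nat.add_sub_cancel' hn] at hadd
  lia

theorem exists_isRecurrent_tail (hap : IsAperiodic u) {C : ℕ}
    (hC : ∃ᶠ n in atTop, factorComplexity u n ≤ n + C) :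
    ∃ k₀ C₀, (∀ᶠ n in atTop, factorComplexity (fun i => u (k₀ + i)) n = n + C₀) ∧
      IsRecurrent fun i => u (k₀ + i) := by
  obtain ⟨k₀, C₀, hle, hge⟩ := exists_tail_minimal_factorComplexity hu hap hC
  refine ⟨k₀, C₀, (hge k₀).mono fun n hn => (hle n).antisymm hn, fun n i k => ?_⟩
  obtain ⟨N, hnN, hN⟩ := ((eventually_ge_atTop n).and (hge (k₀ + k))).exists
  simp only [add_assoc] at hN
  have heq := Set.eq_of_subset_of_ncard_le
    (range_factor_tail_subset (u := fun i => u (k₀ + i)) (n := N) k) ((hle N).trans hN)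
    (finite_range_factor (finite_range_tail hu k₀) N)
  obtain ⟨j, hj⟩ := heq.ge ⟨i, rfl⟩
  refine ⟨k + j, Nat.le_add_right k j, Agree.mono (fun t ht => ?_) hnN⟩
  simpa only [factor, add_assoc] using (congrFun hj ⟨t, ht⟩).symm

end Finite

end Factors

section Return

variable {α : Type*} {v : ℕ → α} {n i j k : ℕ}

/-- The factor of length `n` at position `i` is right special: some other occurrence of it is
followed by a different letter. -/
def IsRightSpecial (v : ℕ → α) (n i : ℕ) : Prop :=
  ∃ j, Agree v n i j ∧ v (i + n) ≠ v (j + n)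

/-- `g` is the return time from an occurrence of a right special factor of length `n` followed by
the letter `c` to the next right special factor, and the path taken does not depend on the
occurrence. -/
structure IsReturnTime (v : ℕ → α) (n : ℕ) (c : α) (g : ℕ) : Prop where
  pos : 0 < g
  le : g ≤ factorComplexity v n
  isRightSpecial_add : ∀ i, IsRightSpecial v n i → v (i + n) = c → IsRightSpecial v n (i + g)
  not_isRightSpecial_add : ∀ i, IsRightSpecial v n i → v (i + n) = c →
    ∀ s, 0 < s → s < g → ¬ IsRightSpecial v n (i + s)
  agree : ∀ i j, IsRightSpecial v n i → v (i + n) = c → IsRightSpecial v n j → v (j + n) = c →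
    Agree v (n + g) i j

/-- `v` has exactly one right special factor of length `n`, its right extensions are by the letters
`a true` and `a false`, and `G b` is the return time to it through the letter `a b`. In terms of
Rauzy graphs: the graph of order `n` consists of two loops at one vertex. -/
structure IsReturnSystem (v : ℕ → α) (n : ℕ) (a : Bool → α) (G : Bool → ℕ) : Prop where
  agree : ∀ i j, IsRightSpecial v n i → IsRightSpecial v n j → Agree v n i j
  exists_letter : ∀ i, IsRightSpecial v n i → ∃ b, v (i + n) = a b
  exists_position : ∀ b, ∃ i, IsRightSpecial v n i ∧ v (i + n) = a b
  isReturnTime : ∀ b, IsReturnTime v n (a b) (G b)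

lemma IsRightSpecial.of_agree (h : IsRightSpecial v n i) (hk : Agree v n i k) :
    IsRightSpecial v n k := by
  obtain ⟨j, hj, hne⟩ := h
  by_cases heq : v (k + n) = v (i + n)
  · exact ⟨j, hk.symm.trans hj, by rwa [heq]⟩
  · exact ⟨i, hk.symm, heq⟩

lemma Agree.succ_of_not_isRightSpecial (h : Agree v n i j) (hi : ¬ IsRightSpecial v n i) :
    Agree v (n + 1) i j :=
  h.succ (by_contra fun hne => hi ⟨j, h, hne⟩)

lemma IsRightSpecial.shift (s : ℕ) (h : IsRightSpecial v (n + s) i) :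
    IsRightSpecial v n (i + s) := by
  obtain ⟨j, hj, hne⟩ := h
  refine ⟨j + s, hj.shift s, ?_⟩
  rwa [add_assoc, add_assoc, add_comm s]

lemma exists_isRightSpecial (hv : (Set.range v).Finite) (hap : IsAperiodic v) (n k : ℕ) :
    ∃ i, k ≤ i ∧ i < k + factorComplexity v n ∧ IsRightSpecial v n i := by
  by_contra! hk
  obtain ⟨i, j, hki, hij, hj, h⟩ := exists_agree_of_factorComplexity hv n k
  -- No special factor between `i` and `j` means that `v` is deterministic, hence periodic, there.
  have hcycle (s : ℕ) : ∃ i', i ≤ i' ∧ i' < j ∧ Agree v n (i + s) i' := by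
    induction s with
    | zero => exact ⟨i, le_rfl, hij, fun _ _ => rfl⟩
    | succ s ih =>
      obtain ⟨i', hle, hlt, hi'⟩ := ih
      have hnext := ((hi'.symm.succ_of_not_isRightSpecial
        (hk i' (hki.trans hle) (hlt.trans_le hj))).shift 1).symm
      rcases (Nat.succ_le_of_lt hlt).eq_or_lt with heq | hlt'
      · rw [← heq] at h
        exact ⟨i, le_rfl, hij, hnext.trans h.symm⟩
      · exact ⟨i' + 1, hle.trans i'.le_succ, hlt', hnext⟩
  have hnot (s : ℕ) : ¬ IsRightSpecial v n (i + s) := by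
    intro hs
    obtain ⟨i', hle, hlt, hi'⟩ := hcycle s
    exact hk i' (hki.trans hle) (hlt.trans_le hj) (hs.of_agree hi')
  have hagree (s : ℕ) : Agree v n (i + s) (j + s) := by
    induction s with
    | zero => exact h
    | succ s ih => exact (ih.succ_of_not_isRightSpecial (hnot s)).shift 1
  obtain ⟨t, ht⟩ := hap i j hij
  exact ht ((hagree t).succ_of_not_isRightSpecial (hnot t) 0 n.succ_pos)

lemma agree_of_isRightSpecial (hv : (Set.range v).Finite)
    (hn : factorComplexity v (n + 1) ≤ factorComplexity v n + 1) (hi : IsRightSpecial v n i)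
    (hj : IsRightSpecial v n j) : Agree v n i j := by
  obtain ⟨i', hi, hi'⟩ := hi
  obtain ⟨j', hj, hj'⟩ := hj
  rcases agree_succ_or_agree_succ hv hn hi hi' hj hj' with h | h
  · exact (h.mono n.le_succ).symm
  · exact hi.trans (h.mono n.le_succ).symm

lemma exists_isReturnTime (hv : (Set.range v).Finite) (hap : IsAperiodic v)
    (hn : factorComplexity v (n + 1) ≤ factorComplexity v n + 1) {i₀ : ℕ}
    (hi₀ : IsRightSpecial v n i₀) : ∃ g, IsReturnTime v n (v (i₀ + n)) g := by
  obtain ⟨i₁, hlt, hle, hi₁⟩ := exists_isRightSpecial hv hap n (i₀ + 1)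
  have hex : ∃ g, 0 < g ∧ IsRightSpecial v n (i₀ + g) :=
    ⟨i₁ - i₀, by lia, by rwa [Nat.add_sub_cancel' (by lia)]⟩
  obtain ⟨hpos, hspec⟩ := Nat.find_spec hex
  have hmin {s : ℕ} (hs : 0 < s) (hsg : s < Nat.find hex) : ¬ IsRightSpecial v n (i₀ + s) :=
    fun h => Nat.find_min hex hsg ⟨hs, h⟩
  have hagree {j : ℕ} (hj : IsRightSpecial v n j) (hjc : v (j + n) = v (i₀ + n)) :
      ∀ s, 0 < s → s ≤ Nat.find hex → Agree v (n + s) i₀ j := by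
    intro s hs
    induction s, hs using Nat.le_induction with
    | base => exact fun _ => (agree_of_isRightSpecial hv hn hi₀ hj).succ hjc.symm
    | succ s hs ih =>
      intro hsg
      have hstep := (((ih (by lia)).shift s).succ_of_not_isRightSpecial
        (hmin hs (by lia))) n n.lt_succ_self
      refine (ih (by lia)).succ ?_
      rwa [add_comm n s, ← add_assoc, ← add_assoc]
  refine ⟨Nat.find hex, hpos, ?_, fun j hj hjc => ?_, fun j hj hjc s hs hsg hjs => ?_,
    fun j k hj hjc hk hkc => (hagree hj hjc _ hpos le_rfl).symm.trans (hagree hk hkc _ hpos le_rfl)⟩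
  · refine (Nat.find_min' hex (m := i₁ - i₀) ⟨by lia, ?_⟩).trans (by lia)
    rwa [Nat.add_sub_cancel' (by lia)]
  · exact hspec.of_agree ((hagree hj hjc _ hpos le_rfl).shift _)
  · exact hmin hs hsg (hjs.of_agree ((hagree hj hjc s hs hsg.le).shift s).symm)

theorem exists_isReturnSystem (hv : (Set.range v).Finite) (hap : IsAperiodic v) {n₀ : ℕ}
    (hn₀ : ∀ n ≥ n₀, factorComplexity v (n + 1) ≤ factorComplexity v n + 1) :
    ∃ a, ∀ n ≥ n₀, ∃ G, IsReturnSystem v n a G := by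
  obtain ⟨i₀, -, -, j₀, h₀, hne⟩ := exists_isRightSpecial hv hap n₀ 0
  refine ⟨fun b => if b then v (i₀ + n₀) else v (j₀ + n₀), fun n hn => ?_⟩
  have hletter (i : ℕ) (hi : IsRightSpecial v n i) :
      v (i + n) = v (i₀ + n₀) ∨ v (i + n) = v (j₀ + n₀) := by
    obtain ⟨m, rfl⟩ := Nat.exists_eq_add_of_le hn
    obtain ⟨j, hj, hj'⟩ := hi.shift m
    refine (agree_succ_or_agree_succ hv (hn₀ n₀ le_rfl) h₀ hne hj hj').imp ?_ ?_ <;>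
    · intro h
      have := h n₀ n₀.lt_succ_self
      rwa [add_assoc, add_comm m] at this
  have hexists : (∃ i, IsRightSpecial v n i ∧ v (i + n) = v (i₀ + n₀)) ∧
      ∃ i, IsRightSpecial v n i ∧ v (i + n) = v (j₀ + n₀) := by
    obtain ⟨i, -, -, hi⟩ := exists_isRightSpecial hv hap n 0
    obtain ⟨j, hj, hij⟩ := id hi
    have hj := hi.of_agree hj
    rcases hletter i hi with hi' | hi' <;> rcases hletter j hj with hj' | hj'
    · exact absurd (hi'.trans hj'.symm) hij
    · exact ⟨⟨i, hi, hi'⟩, ⟨j, hj, hj'⟩⟩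
    · exact ⟨⟨j, hj, hj'⟩, ⟨i, hi, hi'⟩⟩
    · exact absurd (hi'.trans hj'.symm) hij
  obtain ⟨⟨i₁, hi₁, hi₁'⟩, ⟨j₁, hj₁, hj₁'⟩⟩ := hexists
  obtain ⟨g, hg⟩ := exists_isReturnTime hv hap (hn₀ n hn) hi₁
  obtain ⟨g', hg'⟩ := exists_isReturnTime hv hap (hn₀ n hn) hj₁
  rw [hi₁'] at hg
  rw [hj₁'] at hg'
  exact ⟨fun b => if b then g else g', fun i j => agree_of_isRightSpecial hv (hn₀ n hn),
    fun i hi => (hletter i hi).elim (fun h => ⟨true, h⟩) fun h => ⟨false, h⟩,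
    Bool.forall_bool.2 ⟨⟨j₁, hj₁, hj₁'⟩, ⟨i₁, hi₁, hi₁'⟩⟩, Bool.forall_bool.2 ⟨hg', hg⟩⟩

namespace IsReturnSystem

variable {a : Bool → α} {G G' : Bool → ℕ} {b : Bool}

lemma exists_between (h : IsReturnSystem v n a G) (hi : IsRightSpecial v n i) (p : ℕ) :
    ∃ j b s, i ≤ j ∧ IsRightSpecial v n j ∧ v (j + n) = a b ∧ i + p = j + s ∧ s < G b := by
  induction p with
  | zero =>
    obtain ⟨b, hb⟩ := h.exists_letter i hi
    exact ⟨i, b, 0, le_rfl, hi, hb, rfl, (h.isReturnTime b).pos⟩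
  | succ p ih =>
    obtain ⟨j, b, s, hij, hj, hjb, heq, hs⟩ := ih
    rcases (Nat.succ_le_of_lt hs).eq_or_lt with heq' | hlt
    · have hj' := (h.isReturnTime b).isRightSpecial_add j hj hjb
      obtain ⟨b', hb'⟩ := h.exists_letter _ hj'
      exact ⟨j + G b, b', 0, by lia, hj', hb', by lia, (h.isReturnTime b').pos⟩
    · exact ⟨j, b, s + 1, hij, hj, hjb, by lia, hlt⟩

lemma exists_predecessor (h : IsReturnSystem v n a G) (hi : IsRightSpecial v n i)
    (hk : IsRightSpecial v n k) (hik : i < k) :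
    ∃ j b, i ≤ j ∧ IsRightSpecial v n j ∧ v (j + n) = a b ∧ j + G b = k := by
  obtain ⟨j, b, s, hij, hj, hjb, heq, hs⟩ := h.exists_between hi (k - 1 - i)
  refine ⟨j, b, hij, hj, hjb, ?_⟩
  by_contra hne
  refine (h.isReturnTime b).not_isRightSpecial_add j hj hjb (s + 1) s.succ_pos (by lia) ?_
  rwa [show j + (s + 1) = k by lia]

lemma le_of_succ (h : IsReturnSystem v n a G) (h' : IsReturnSystem v (n + 1) a G') (b : Bool) :
    G b ≤ G' b := by
  obtain ⟨i, hi, hib⟩ := h'.exists_position b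
  by_contra! hlt
  refine (h.isReturnTime b).not_isRightSpecial_add (i + 1) (hi.shift 1) ?_ (G' b)
    (h'.isReturnTime b).pos hlt ?_
  · rwa [add_assoc, add_comm 1]
  · rw [add_right_comm]
    exact ((h'.isReturnTime b).isRightSpecial_add i hi hib).shift 1

lemma factorComplexity_le (h : IsReturnSystem v n a G) (hrec : IsRecurrent v) :
    factorComplexity v n ≤ G true + G false := by
  choose r hr hra using h.exists_position
  let loop (b : Bool) : Finset (Fin n → α) :=
    (Finset.range (G b)).image fun s => factor v n (r b + s)
  have hloop (b : Bool) : (loop b).card ≤ G b :=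
    Finset.card_image_le.trans (Finset.card_range _).le
  have hcover : Set.range (factor v n) ⊆ ↑(loop true ∪ loop false) := by
    rintro _ ⟨p, rfl⟩
    obtain ⟨p', hp', hpp'⟩ := hrec n p (r true)
    obtain ⟨j, b, s, -, hj, hjb, heq, hs⟩ := h.exists_between (hr true) (p' - r true)
    rw [Nat.add_sub_cancel' hp'] at heq
    have hmem : factor v n p ∈ loop b := by
      refine Finset.mem_image.2 ⟨s, Finset.mem_range.2 hs, factor_eq_factor_iff.2 ?_⟩
      refine Agree.trans (Agree.shift s ?_) (heq ▸ hpp'.symm)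
      exact ((h.isReturnTime b).agree _ _ (hr b) (hra b) hj hjb).mono (by lia)
    rw [Finset.mem_coe, Finset.mem_union]
    cases b
    exacts [Or.inr hmem, Or.inl hmem]
  calc factorComplexity v n ≤ (loop true ∪ loop false).card := by
        rw [← Set.ncard_coe_finset]
        exact Set.ncard_le_ncard hcover (Finset.finite_toSet _)
    _ ≤ (loop true).card + (loop false).card := Finset.card_union_le _ _
    _ ≤ G true + G false := add_le_add (hloop true) (hloop false)

lemma eq_of_succ_of_lt (h : IsReturnSystem v n a G) (h' : IsReturnSystem v (n + 1) a G')
    (hlt : G' b < G (!b)) : G' b = G b := by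
  refine le_antisymm ?_ (h.le_of_succ h' b)
  by_contra! hgt
  obtain ⟨j, hj, hjb⟩ := h'.exists_position b
  have hj₁ : IsRightSpecial v n (j + 1) := hj.shift 1
  have hj₂ : IsRightSpecial v n (j + G' b + 1) :=
    ((h'.isReturnTime b).isRightSpecial_add j hj hjb).shift 1
  have hpos := (h.isReturnTime b).pos
  have heq_of_add_le {b' : Bool} (hle : G b' ≤ G' b) : b' = b := by
    by_contra hne
    rw [Bool.eq_not_of_ne hne] at hle
    lia
  -- The loop `b` is run through twice before the end of the loop `b` of order `n + 1`, and its
  -- second start is a right special factor of length `n + 1`.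
  obtain ⟨i, b₁, hji, hi, hib, hiG⟩ := h.exists_predecessor hj₁ hj₂ (by lia)
  obtain rfl := heq_of_add_le (b' := b₁) (by lia)
  obtain ⟨i', b₂, hji', hi', hib', hiG'⟩ := h.exists_predecessor hj₁ hi (by lia)
  obtain rfl := heq_of_add_le (b' := b₂) (by lia)
  have hlast := (h.isReturnTime b₂).agree i' i hi' hib' hi hib (G b₂ - 1) (by lia)
  rw [show i' + (G b₂ - 1) = i - 1 by lia, show i + (G b₂ - 1) = j + G' b₂ by lia] at hlast
  have hagree : Agree v (n + 1) (i - 1) (j + G' b₂) := by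
    refine Agree.of_shift hlast ?_
    rw [Nat.sub_add_cancel (by lia)]
    exact h.agree _ _ hi hj₂
  refine (h'.isReturnTime b₂).not_isRightSpecial_add j hj hjb (i - 1 - j) (by lia) (by lia) ?_
  rw [Nat.add_sub_cancel' (by lia)]
  exact ((h'.isReturnTime b₂).isRightSpecial_add j hj hjb).of_agree hagree.symm

lemma apply_add_eq (h : IsReturnSystem v n a G) (hi : IsRightSpecial v n i) {t : ℕ}
    (ht : t + G b < n) : v (i + t) = v (i + t + G b) := by
  obtain ⟨j, hj, hjb⟩ := h.exists_position b
  have hj' := (h.isReturnTime b).isRightSpecial_add j hj hjb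
  have h₁ := h.agree i j hi hj (t + G b) ht
  have h₂ := h.agree i (j + G b) hi hj' t (by lia)
  rw [add_assoc, h₂, h₁, add_assoc, add_comm t]

end IsReturnSystem

end Return

section Blocks

variable {α : Type*} {v : ℕ → α} {a : Bool → α}

/-- The position of the `k`-th block, relative to the first one, in a concatenation of blocks of
lengths `G b` indexed by the word `w`. -/
def blockStart {β : Type*} (G : β → ℕ) (w : ℕ → β) (k : ℕ) : ℕ :=
  ∑ l ∈ Finset.range k, G (w l)

lemma blockStart_succ {β : Type*} (G : β → ℕ) (w : ℕ → β) (k : ℕ) :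
    blockStart G w (k + 1) = blockStart G w k + G (w k) :=
  Finset.sum_range_succ ..

/-- From position `i₀` on, `u` is a concatenation of blocks indexed by the word `w`: the block
indexed by `b` has length `G b` and is the factor at position `p b`. -/
def IsBlockDecomposition {β : Type*} (u : ℕ → α) (i₀ : ℕ) (p G : β → ℕ) (w : ℕ → β) : Prop :=
  ∀ k, Agree u (G (w k)) (i₀ + blockStart G w k) (p (w k))

lemma IsReturnSystem.exists_isBlockDecomposition {n i : ℕ} {G : Bool → ℕ}
    (h : IsReturnSystem v n a G) (hi : IsRightSpecial v n i) :
    ∃ p w, IsBlockDecomposition v i p G w := by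
  choose b hb using h.exists_letter
  choose p hp hpb using h.exists_position
  let pos : ℕ → {j // IsRightSpecial v n j} := Nat.rec ⟨i, hi⟩ fun _ j =>
    ⟨j + G (b j j.2), (h.isReturnTime _).isRightSpecial_add j j.2 (hb j j.2)⟩
  let w (k : ℕ) : Bool := b (pos k).1 (pos k).2
  have hpos (k : ℕ) : (pos k).1 = i + blockStart G w k := by
    induction k with
    | zero => rfl
    | succ k ih => rw [blockStart_succ, ← add_assoc, ← ih]
  refine ⟨p, w, fun k => ?_⟩
  rw [← hpos]
  exact ((h.isReturnTime _).agree _ _ (pos k).2 (hb _ _) (hp _) (hpb _)).mono (Nat.le_add_left _ _)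

variable {n₀ C : ℕ} {G : ℕ → Bool → ℕ}

lemma exists_returnTime_ne (hap : IsAperiodic v) (hrec : IsRecurrent v)
    (hG : ∀ n ≥ n₀, IsReturnSystem v n a (G n)) (hC : ∀ n ≥ n₀, factorComplexity v n ≤ n + C)
    (b : Bool) (g : ℕ) : ∃ n ≥ n₀, G n b ≠ g := by
  by_contra! hg
  have hpos : 0 < g := hg n₀ le_rfl ▸ ((hG n₀ le_rfl).isReturnTime b).pos
  have hdefect (k : ℕ) : ∃ j ≥ k, v j ≠ v (j + g) := by
    obtain ⟨t, ht⟩ := hap k (k + g) (by lia)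
    exact ⟨k + t, by lia, by rwa [add_right_comm]⟩
  obtain ⟨j₁, -, hj₁⟩ := hdefect 0
  obtain ⟨j₂, hj, hj₂⟩ := hdefect (j₁ + g + C + 1)
  obtain ⟨d, rfl⟩ := Nat.exists_eq_add_of_le (show j₁ ≤ j₂ by lia)
  have hn : n₀ ≤ n₀ + d + g := by lia
  have hsys := hG _ hn
  have hperiod {i t : ℕ} (hi : IsRightSpecial v (n₀ + d + g) i) (ht : t + g < n₀ + d + g) :
      v (i + t) = v (i + t + g) := by
    have := hsys.apply_add_eq hi (b := b) (t := t)
    rw [hg _ hn] at this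
    exact this ht
  obtain ⟨i₀, hi₀, -⟩ := hsys.exists_position true
  obtain ⟨j, hij, hagree⟩ := hrec (d + g + 1) j₁ i₀
  obtain ⟨i, b', s, -, hi, hib, heq, hs⟩ := hsys.exists_between hi₀ (j - i₀)
  rw [Nat.add_sub_cancel' hij] at heq
  have hdefect₁ : v j ≠ v (j + g) := by
    rwa [show v j₁ = v j from hagree 0 (by lia), hagree g (by lia)] at hj₁
  have hdefect₂ : v (j + d) ≠ v (j + d + g) := by
    rwa [add_assoc, ← hagree d (by lia), ← hagree (d + g) (by lia), ← add_assoc]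
  -- `v` has period `g` on each right special factor, so the defect at `j` lies near the end of the
  -- one at `i`; the defect at `j + d` then falls inside the next one.
  have hs' : n₀ + d ≤ s := by
    by_contra! hlt
    exact hdefect₁ (heq ▸ hperiod hi (by lia))
  have hle := (hsys.isReturnTime b').le.trans (hC _ hn)
  refine hdefect₂ ?_
  rw [show j + d = i + G (n₀ + d + g) b' + (j + d - (i + G (n₀ + d + g) b')) by lia]
  exact hperiod ((hsys.isReturnTime b').isRightSpecial_add i hi hib) (by lia)

lemma exists_le_four_mul_returnTime (hap : IsAperiodic v) (hrec : IsRecurrent v)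
    (hG : ∀ n ≥ n₀, IsReturnSystem v n a (G n)) (hC : ∀ n ≥ n₀, factorComplexity v n = n + C) :
    ∃ n ≥ n₀, ∀ b, n ≤ 4 * G n b := by
  by_contra! hsmall
  have hsum {n : ℕ} (hn : n ≥ n₀) (b : Bool) : n ≤ G n b + G n (!b) := by
    have := (hG n hn).factorComplexity_le hrec
    rw [hC n hn] at this
    cases b <;> simp only [Bool.not_true, Bool.not_false] <;> lia
  obtain ⟨b, hb⟩ := hsmall n₀ le_rfl
  have hlt {n : ℕ} (hn : n₀ ≤ n) : 4 * G n b < n := by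
    induction n, hn using Nat.le_induction with
    | base => exact hb
    | succ n hn ih =>
      obtain ⟨b', hb'⟩ := hsmall (n + 1) (by lia)
      rcases eq_or_ne b' b with rfl | hne
      · exact hb'
      · obtain rfl := Bool.eq_not_of_ne hne
        have := (hG n hn).le_of_succ (hG (n + 1) (by lia)) (!b)
        have := hsum hn b
        lia
  have hconst {n : ℕ} (hn : n₀ ≤ n) : G n b = G n₀ b := by
    induction n, hn using Nat.le_induction with
    | base => rfl
    | succ n hn ih =>
      refine ((hG n hn).eq_of_succ_of_lt (hG (n + 1) (by lia)) ?_).trans ih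
      have := hsum hn b
      have := hlt hn
      have := hlt (show n₀ ≤ n + 1 by lia)
      lia
  obtain ⟨n, hn, hne⟩ := exists_returnTime_ne hap hrec hG (fun n hn => (hC n hn).le) b (G n₀ b)
  exact hne (hconst hn)

theorem exists_isBlockDecomposition {u : ℕ → α} (hu : (Set.range u).Finite) (hap : IsAperiodic u)
    (hC : ∃ᶠ n in atTop, factorComplexity u n ≤ n + C) :
    ∃ C', ∀ N, ∃ n ≥ N, ∃ i₀ p, ∃ G : Bool → ℕ, ∃ w, i₀ ≤ n + C' ∧
      (∀ b, n ≤ 4 * G b ∧ G b ≤ n + C') ∧ IsBlockDecomposition u i₀ p G w := by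
  obtain ⟨k₀, C₀, hev, hrec⟩ := exists_isRecurrent_tail hu hap hC
  obtain ⟨n₀, hn₀⟩ := eventually_atTop.1 hev
  have hfin := finite_range_tail hu k₀
  have hap' := hap.tail k₀
  obtain ⟨a, ha⟩ := exists_isReturnSystem hfin hap' (n₀ := n₀) fun n hn => by
    rw [hn₀ n hn, hn₀ (n + 1) (by lia), add_right_comm]
  choose! G hG using ha
  refine ⟨k₀ + C₀, fun N => ?_⟩
  obtain ⟨n, hn, hbal⟩ := exists_le_four_mul_returnTime (n₀ := max N n₀) hap' hrec
    (fun n hn => hG n (le_of_max_le_right hn)) fun n hn => hn₀ n (le_of_max_le_right hn)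
  have hn' := le_of_max_le_right hn
  obtain ⟨i, -, hi, hspec⟩ := exists_isRightSpecial hfin hap' n 0
  rw [hn₀ n hn'] at hi
  obtain ⟨p, w, hw⟩ := (hG n hn').exists_isBlockDecomposition hspec
  refine ⟨n, le_of_max_le_left hn, k₀ + i, fun b => k₀ + p b, G n, w, by lia,
    fun b => ⟨hbal b, ?_⟩, fun k t ht => ?_⟩
  · exact ((hG n hn').isReturnTime b).le.trans (by rw [hn₀ n hn']; lia)
  · simpa only [add_assoc] using hw k t ht

end Blocks

section Digits

variable {q : ℕ} {x : ℝ} {n i j : ℕ}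

lemma qComplexity_eq_factorComplexity (q : ℕ) (x : ℝ) (n : ℕ) :
    qComplexity q x n = factorComplexity (qdigit q x) n := by
  refine congrArg Set.ncard (Set.ext fun w => exists_congr fun k => ?_)
  exact funext_iff.symm

lemma finite_range_qdigit (hq : 0 < q) (x : ℝ) : (Set.range (qdigit q x)).Finite :=
  (Set.finite_Iio q).subset (Set.range_subset_iff.2 fun _ => Nat.mod_lt _ hq)

/-- The number whose base-`q` expansion is that of `x` from the digit of index `i` on. -/
noncomputable def digitTail (q : ℕ) (x : ℝ) (i : ℕ) : ℝ :=
  Int.fract (x * (q : ℝ) ^ i)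

lemma digitTail_nonneg : 0 ≤ digitTail q x i :=
  Int.fract_nonneg _

lemma digitTail_lt_one : digitTail q x i < 1 :=
  Int.fract_lt_one _

/-- The integer with the `n` base-`q` digits of `x` of indices `i, …, i + n - 1`. -/
noncomputable def digitBlock (q : ℕ) (x : ℝ) (i n : ℕ) : ℤ :=
  ⌊(q : ℝ) ^ n * digitTail q x i⌋

lemma digitBlock_nonneg : 0 ≤ digitBlock q x i n :=
  Int.floor_nonneg.2 (mul_nonneg (by positivity) digitTail_nonneg)

lemma digitBlock_add_one_le (hq : 0 < q) : digitBlock q x i n + 1 ≤ q ^ n := by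
  refine Int.floor_lt.2 ?_
  push_cast
  exact mul_lt_of_lt_one_right (by positivity) digitTail_lt_one

lemma pow_mul_digitTail (q : ℕ) (x : ℝ) (n i : ℕ) :
    (q : ℝ) ^ n * digitTail q x i = digitBlock q x i n + digitTail q x (i + n) := by
  have h : (q : ℝ) ^ n * digitTail q x i =
      x * (q : ℝ) ^ (i + n) - ((q ^ n * ⌊x * (q : ℝ) ^ i⌋ : ℤ) : ℝ) := by
    rw [digitTail, Int.fract]
    push_cast
    ring
  conv_lhs => rw [← Int.floor_add_fract ((q : ℝ) ^ n * digitTail q x i)]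
  rw [digitBlock, add_right_inj, h, Int.fract_sub_intCast, digitTail]

lemma mul_digitTail (hq : 0 < q) (hx : 0 ≤ x) (i : ℕ) :
    q * digitTail q x i = qdigit q x i + digitTail q x (i + 1) := by
  have hfloor : ⌊x * (q : ℝ) ^ i⌋ = ⌊x * (q : ℝ) ^ (i + 1)⌋ / (q : ℤ) := by
    rw [← Int.floor_div_natCast, pow_succ, ← mul_assoc, mul_div_cancel_right₀]
    exact_mod_cast hq.ne'
  have hdigit : ((qdigit q x i : ℕ) : ℤ) = ⌊x * (q : ℝ) ^ (i + 1)⌋ % (q : ℤ) := by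
    rw [qdigit, Int.natCast_mod, Int.toNat_of_nonneg (Int.floor_nonneg.2 (by positivity))]
  have hdivmod : (q : ℝ) * ⌊x * (q : ℝ) ^ i⌋ + qdigit q x i = ⌊x * (q : ℝ) ^ (i + 1)⌋ := by
    exact_mod_cast hfloor ▸ hdigit ▸ Int.mul_ediv_add_emod _ _
  rw [digitTail, digitTail, Int.fract, Int.fract, ← hdivmod]
  ring

lemma Agree.pow_mul_digitTail_sub (hq : 0 < q) (hx : 0 ≤ x) (h : Agree (qdigit q x) n i j) :
    (q : ℝ) ^ n * (digitTail q x i - digitTail q x j) =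
      digitTail q x (i + n) - digitTail q x (j + n) := by
  induction n with
  | zero => simp
  | succ n ih =>
    have hi := mul_digitTail hq hx (i + n)
    have hj := mul_digitTail hq hx (j + n)
    rw [h n n.lt_succ_self] at hi
    rw [pow_succ', mul_assoc, ih (h.mono n.le_succ), ← add_assoc, ← add_assoc]
    linarith

lemma isAperiodic_qdigit (hq : 2 ≤ q) (hx : 0 ≤ x) (hirr : Irrational x) :
    IsAperiodic (qdigit q x) := by
  intro i j hij
  by_contra! h
  have hq1 : (1 : ℝ) < q := by exact_mod_cast hq
  have hbound (n : ℕ) : |digitTail q x i - digitTail q x j| ≤ (q : ℝ)⁻¹ ^ n := by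
    have hagree : Agree (qdigit q x) n i j := fun t _ => h t
    rw [inv_pow, ← one_div, le_div_iff₀' (by positivity)]
    calc (q : ℝ) ^ n * |digitTail q x i - digitTail q x j|
        = |digitTail q x (i + n) - digitTail q x (j + n)| := by
          rw [← hagree.pow_mul_digitTail_sub (by lia) hx, abs_mul, abs_pow, Nat.abs_cast]
      _ ≤ 1 := (abs_sub_lt_of_nonneg_of_lt digitTail_nonneg digitTail_lt_one digitTail_nonneg
          digitTail_lt_one).le
  have hle : |digitTail q x i - digitTail q x j| ≤ 0 :=
    ge_of_tendsto' (tendsto_pow_atTop_nhds_zero_of_lt_one (by positivity)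
      (inv_lt_one_of_one_lt₀ hq1)) hbound
  obtain ⟨z, hz⟩ := Int.fract_eq_fract.1 (sub_eq_zero.1 (abs_nonpos_iff.1 hle))
  refine hirr.mul_intCast (m := q ^ i - q ^ j) (sub_ne_zero.2 ?_) ⟨z, ?_⟩
  · exact_mod_cast (Nat.pow_lt_pow_right hq hij).ne
  · push_cast
    rw [mul_sub, hz]

end Digits

section BlockSum

variable {α : Type*}

/-- The sum over the first `K` blocks of `c b * q ^ (-s)`, where `b` is the index of the block and
`s` the position at which it starts. -/
noncomputable def blockSum (q : ℝ) (c : α → ℚ) (G : α → ℕ) (w : ℕ → α) (K : ℕ) : ℝ :=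
  ∑ k ∈ Finset.range K, c (w k) * (q ^ blockStart G w k)⁻¹

lemma blockSum_congr (q : ℝ) (c : α → ℚ) (G : α → ℕ) {w w' : ℕ → α} {K : ℕ}
    (h : ∀ k < K, w k = w' k) : blockSum q c G w K = blockSum q c G w' K := by
  refine Finset.sum_congr rfl fun k hk => ?_
  have hk := Finset.mem_range.1 hk
  rw [h k hk, blockStart, blockStart,
    Finset.sum_congr rfl fun l hl => congrArg G (h l ((Finset.mem_range.1 hl).trans hk))]

lemma eq_blockSum_add {q κ : ℝ} {c : α → ℚ} {G : α → ℕ} {w : ℕ → α} {Y : ℕ → ℝ}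
    (hY : ∀ k, Y k = κ * c (w k) + (q ^ G (w k))⁻¹ * Y (k + 1)) (K : ℕ) :
    Y 0 = κ * blockSum q c G w K + (q ^ blockStart G w K)⁻¹ * Y K := by
  induction K with
  | zero => simp [blockSum, blockStart]
  | succ K ih =>
    rw [ih, hY K, blockSum, blockSum, Finset.sum_range_succ, blockStart_succ, pow_add, mul_inv]
    ring

lemma le_blockStart {G : α → ℕ} (hG : ∀ a, 0 < G a) (w : ℕ → α) (K : ℕ) :
    K ≤ blockStart G w K := by
  simpa [blockStart] using Finset.card_nsmul_le_sum (Finset.range K) (fun k => G (w k)) 1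
    fun k _ => hG (w k)

lemma eq_zero_of_forall_eq_inv_pow_mul {q V : ℝ} (hq : 1 < q) {G : α → ℕ} (hG : ∀ a, 0 < G a)
    {w : ℕ → α} {Y : ℕ → ℝ} (hV : ∀ k, |Y k| ≤ V) (hY : ∀ k, Y k = (q ^ G (w k))⁻¹ * Y (k + 1)) :
    Y 0 = 0 := by
  have hbound (K : ℕ) : |Y 0| ≤ q⁻¹ ^ K * V := by
    have h := eq_blockSum_add (q := q) (κ := 0) (c := 0) (G := G) (w := w) (Y := Y) (by simpa) K
    rw [h, zero_mul, zero_add, abs_mul, abs_of_nonneg (by positivity), inv_pow]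
    have hpow : (q ^ blockStart G w K)⁻¹ ≤ (q ^ K)⁻¹ :=
      inv_anti₀ (by positivity) (pow_le_pow_right₀ hq.le (le_blockStart hG w K))
    exact mul_le_mul hpow (hV K) (abs_nonneg _) (by positivity)
  have hlim : Tendsto (fun K : ℕ => q⁻¹ ^ K * V) atTop (𝓝 0) := by
    simpa using (tendsto_pow_atTop_nhds_zero_of_lt_one (by positivity)
      (inv_lt_one_of_one_lt₀ hq)).mul_const V
  exact abs_nonpos_iff.1 (ge_of_tendsto' hlim hbound)

end BlockSum

section TwoBlocks

variable {q : ℕ} {G : Bool → ℕ} {B : Bool → ℤ}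

/-- For two blocks of lengths `G b` which are the base-`q` expansions of the integers `B b`, this
integer vanishes iff the two periodic words they generate represent the same number. -/
def blockDet (q : ℕ) (G : Bool → ℕ) (B : Bool → ℤ) : ℤ :=
  B true * (q ^ G false - 1) - B false * (q ^ G true - 1)

/-- The affine function of the tail `T` of a concatenation of two blocks, normalised so as to vanish
on the periodic word generated by the block `false`. -/
noncomputable def blockTail (q : ℕ) (G : Bool → ℕ) (B : Bool → ℤ) (T : ℝ) : ℝ :=
  q ^ G true * ((q ^ G false - 1) * T - B false)

lemma blockTail_eq (hq : q ≠ 0) {b : Bool} {T T' : ℝ} (hT : (q : ℝ) ^ G b * T = B b + T') :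
    blockTail q G B T =
      blockDet q G B * (b.toNat : ℚ) + ((q : ℝ) ^ G b)⁻¹ * blockTail q G B T' := by
  have : (q : ℝ) ≠ 0 := by exact_mod_cast hq
  obtain rfl : T' = (q : ℝ) ^ G b * T - B b := by linarith
  cases b <;>
  · simp only [blockTail, blockDet, Bool.toNat_true, Bool.toNat_false]
    push_cast
    field_simp
    ring

variable (hB₀ : ∀ b, 0 ≤ B b) (hB : ∀ b, B b + 1 ≤ q ^ G b)

include hB₀ hB

lemma abs_blockDet_le : |(blockDet q G B : ℝ)| ≤ (q : ℝ) ^ (G true + G false) := by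
  rw [pow_add]
  norm_cast
  push_cast
  have h₀ := hB₀ true
  have h₁ := hB₀ false
  have h₂ := hB true
  have h₃ := hB false
  rw [blockDet, abs_le]
  constructor <;> nlinarith

lemma abs_blockTail_le {T : ℝ} (hT₀ : 0 ≤ T) (hT : T ≤ 1) :
    |blockTail q G B T| ≤ (q : ℝ) ^ (G true + G false) := by
  have h₀ : (0 : ℝ) ≤ B false := by exact_mod_cast hB₀ false
  have h₁ : (B false : ℝ) + 1 ≤ (q : ℝ) ^ G false := by exact_mod_cast hB false
  rw [blockTail, abs_mul, abs_of_nonneg (by positivity), pow_add]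
  refine mul_le_mul_of_nonneg_left (abs_le.2 ⟨?_, ?_⟩) (by positivity) <;> nlinarith

end TwoBlocks

section AffineTail

variable {q : ℕ} {x : ℝ} {G : Bool → ℕ} {B : Bool → ℤ} {i : ℕ}

lemma exists_blockTail_digitTail_eq (hq : 2 ≤ q) (hx : x ∈ Set.Ioo (0 : ℝ) 1)
    (hG : 0 < G false) (hB₀ : 0 ≤ B false) (hB : B false + 1 ≤ q ^ G false) :
    ∃ g h : ℤ, g ≠ 0 ∧ |(g : ℝ)| ≤ (q : ℝ) ^ (G true + G false + i) ∧
      |(h : ℝ)| ≤ (q : ℝ) ^ (G true + G false + i) ∧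
      blockTail q G B (digitTail q x i) = g * x + h := by
  have : 0 < (q : ℤ) := by exact_mod_cast hq.trans_lt' two_pos
  set N := ⌊x * (q : ℝ) ^ i⌋
  have hN₀ : 0 ≤ N := Int.floor_nonneg.2 (mul_nonneg hx.1.le (by positivity))
  have hN : N + 1 ≤ q ^ i := by
    refine Int.floor_lt.2 ?_
    push_cast
    exact mul_lt_of_lt_one_left (by positivity) hx.2
  have hpow : 1 < (q : ℤ) ^ G false := one_lt_pow₀ (by exact_mod_cast hq) hG.ne'
  have hnonneg := mul_nonneg (sub_nonneg.2 hpow.le) hN₀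
  let g : ℤ := q ^ G true * ((q ^ G false - 1) * q ^ i)
  let h : ℤ := q ^ G true * ((q ^ G false - 1) * N + B false)
  have hg₀ : 0 < g := mul_pos (by positivity) (mul_pos (by lia) (by positivity))
  have hgV : |g| ≤ q ^ (G true + G false + i) := by
    rw [abs_of_pos hg₀, add_assoc, pow_add, pow_add]
    simp only [g]
    gcongr
    lia
  have hhV : |-h| ≤ q ^ (G true + G false + i) := by
    rw [abs_neg, abs_of_nonneg (mul_nonneg (by positivity) (add_nonneg hnonneg hB₀)), add_assoc,
      pow_add, pow_add]
    gcongr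
    nlinarith
  refine ⟨g, -h, hg₀.ne', by exact_mod_cast hgV, by exact_mod_cast hhV, ?_⟩
  rw [blockTail, digitTail, Int.fract]
  simp only [g, h]
  push_cast
  ring

lemma IsBlockDecomposition.pow_mul_digitTail {p : Bool → ℕ} {w : ℕ → Bool} (hq : 0 < q)
    (hx : 0 ≤ x) (hw : IsBlockDecomposition (qdigit q x) i p G w) (k : ℕ) :
    (q : ℝ) ^ G (w k) * digitTail q x (i + blockStart G w k) =
      digitBlock q x (p (w k)) (G (w k)) + digitTail q x (i + blockStart G w (k + 1)) := by
  have h₁ := (hw k).pow_mul_digitTail_sub hq hx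
  have h₂ := _root_.pow_mul_digitTail q x (G (w k)) (p (w k))
  rw [blockStart_succ, ← add_assoc]
  linarith

theorem IsBlockDecomposition.exists_affineRelated {p : Bool → ℕ} {w : ℕ → Bool} (hq : 2 ≤ q)
    (hx : x ∈ Set.Ioo (0 : ℝ) 1) (hirr : Irrational x) (hG : ∀ b, 0 < G b)
    (hw : IsBlockDecomposition (qdigit q x) i p G w) :
    ∃ y, AffineRelated (q ^ (G true + G false + i)) x y ∧
      ∀ K, |y - blockSum q (fun b => b.toNat) G w K| ≤
        q ^ (G true + G false) * ((q : ℝ) ^ blockStart G w K)⁻¹ := by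
  have hq0 : 0 < q := by lia
  have hq1 : (1 : ℝ) < q := by exact_mod_cast hq
  let B (b : Bool) : ℤ := digitBlock q x (p b) (G b)
  have hB₀ (b : Bool) : 0 ≤ B b := digitBlock_nonneg
  have hB (b : Bool) : B b + 1 ≤ q ^ G b := digitBlock_add_one_le hq0
  let T (k : ℕ) : ℝ := digitTail q x (i + blockStart G w k)
  have hT (k : ℕ) : (q : ℝ) ^ G (w k) * T k = B (w k) + T (k + 1) :=
    hw.pow_mul_digitTail hq0 hx.1.le k
  have hY (k : ℕ) := blockTail_eq (G := G) (B := B) hq0.ne' (hT k)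
  have hbound (k : ℕ) : |blockTail q G B (T k)| ≤ (q : ℝ) ^ (G true + G false) :=
    abs_blockTail_le hB₀ hB digitTail_nonneg digitTail_lt_one.le
  obtain ⟨g, h, hg, hgV, hhV, hgh⟩ := exists_blockTail_digitTail_eq (i := i) hq hx (hG false)
    (hB₀ false) (hB false)
  have hdet : blockDet q G B ≠ 0 := by
    intro h₀
    have hirr' : Irrational (g * x + h) := (hirr.intCast_mul hg).add_intCast h
    refine hirr'.ne_zero (hgh.symm.trans ?_)
    exact eq_zero_of_forall_eq_inv_pow_mul hq1 hG hbound (by simpa [h₀] using hY)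
  have hdet' : (blockDet q G B : ℝ) ≠ 0 := by exact_mod_cast hdet
  have hdet₁ : 1 ≤ |(blockDet q G B : ℝ)| := by exact_mod_cast Int.one_le_abs hdet
  refine ⟨blockTail q G B (T 0) / blockDet q G B, ⟨g, h, blockDet q G B, hg, hdet, hgV, hhV,
    (abs_blockDet_le hB₀ hB).trans (pow_le_pow_right₀ hq1.le (Nat.le_add_right _ _)), ?_⟩,
    fun K => ?_⟩
  · rw [mul_div_cancel₀ _ hdet', ← hgh]
    rfl
  · have hsum := eq_blockSum_add (q := q) (c := fun b : Bool => (b.toNat : ℚ)) hY K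
    rw [hsum, add_div, mul_div_cancel_left₀ _ hdet', add_sub_cancel_left, abs_div, abs_mul,
      abs_of_nonneg (by positivity), mul_comm]
    exact (div_le_self (by positivity) hdet₁).trans
      (mul_le_mul_of_nonneg_right (hbound K) (by positivity))

end AffineTail

section UltrafilterLimits

variable {ι : Type*} {l : Filter ι} {𝓤 : Ultrafilter ι} {g h : ι → ℕ} {i j δ : ℤ}

lemma exists_forall_eventually_forall_lt_eq {α : Type*} [Finite α] (𝓤 : Ultrafilter ι)
    (w : ι → ℕ → α) : ∃ W : ℕ → α, ∀ K, ∀ᶠ N in (𝓤 : Filter ι), ∀ k < K, w N k = W k := by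
  have hW (k : ℕ) : ∃ a, ∀ᶠ N in (𝓤 : Filter ι), w N k = a :=
    Ultrafilter.eventually_exists_iff.1 (.of_forall fun N => ⟨w N k, rfl⟩)
  choose W hW using hW
  exact ⟨W, fun K => (Filter.eventually_all_finite (Set.finite_Iio K)).2 fun k _ => hW k⟩

lemma exists_eventually_eq_of_not_tendsto_abs_atTop {f : ι → ℤ}
    (hf : ¬ Tendsto (fun N => |f N|) 𝓤 atTop) : ∃ δ, ∀ᶠ N in (𝓤 : Filter ι), f N = δ := by
  simp only [tendsto_atTop, not_forall] at hf
  obtain ⟨D, hD⟩ := hf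
  have hbdd : ∀ᶠ N in (𝓤 : Filter ι), ∃ δ ∈ Set.Icc (-D) D, f N = δ :=
    (Ultrafilter.eventually_not.2 hD).mono fun N hN =>
      ⟨f N, abs_le.1 (not_le.1 hN).le, rfl⟩
  obtain ⟨δ, -, hδ⟩ := (Ultrafilter.eventually_exists_mem_iff (Set.finite_Icc _ _)).1 hbdd
  exact ⟨δ, hδ⟩

lemma neg_of_eventually_mul_add_mul_eq [l.NeBot] (hg : Tendsto g l atTop)
    (hδ : ∀ᶠ N in l, i * g N + j * h N = δ) (hi : 0 < i) : j < 0 := by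
  obtain ⟨N, hN, hgN⟩ := (hδ.and (hg.eventually_gt_atTop δ.natAbs)).exists
  have hgδ : δ < g N := by lia
  by_contra! hj
  nlinarith [mul_nonneg hj (h N).cast_nonneg]

lemma exists_pos_mul_eq_mul_add [l.NeBot] (hg : Tendsto g l atTop) (hh : Tendsto h l atTop)
    (hij : i ≠ 0 ∨ j ≠ 0) (hδ : ∀ᶠ N in l, i * g N + j * h N = δ) :
    ∃ (a b : ℕ) (r : ℤ), 0 < a ∧ 0 < b ∧ ∀ᶠ N in l, (b * g N : ℤ) = a * h N + r := by
  have main {i j δ : ℤ} (hi : 0 < i) (hδ : ∀ᶠ N in l, i * g N + j * h N = δ) :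
      ∃ (a b : ℕ) (r : ℤ), 0 < a ∧ 0 < b ∧ ∀ᶠ N in l, (b * g N : ℤ) = a * h N + r := by
    have hj := neg_of_eventually_mul_add_mul_eq hg hδ hi
    refine ⟨j.natAbs, i.natAbs, δ, by lia, by lia, hδ.mono fun N hN => ?_⟩
    rw [Int.natCast_natAbs, Int.natCast_natAbs, abs_of_pos hi, abs_of_neg hj]
    linarith
  have hneg : ∀ᶠ N in l, -i * g N + -j * h N = -δ := hδ.mono fun N hN => by linarith
  have hswap : ∀ᶠ N in l, j * h N + i * g N = δ := hδ.mono fun N hN => by linarith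
  have hswap' : ∀ᶠ N in l, -j * h N + -i * g N = -δ := hneg.mono fun N hN => by linarith
  rcases lt_trichotomy i 0 with hi | rfl | hi
  · exact main (neg_pos.2 hi) hneg
  · rcases lt_or_gt_of_ne (hij.resolve_left fun h => h rfl) with hj | hj
    · exact absurd (neg_of_eventually_mul_add_mul_eq hh hswap' (neg_pos.2 hj)) (by simp)
    · exact absurd (neg_of_eventually_mul_add_mul_eq hh hswap hj) (by simp)
  · exact main hi hδ

lemma exists_eventually_eq_mul_add (hg : Tendsto g 𝓤 atTop) {a b : ℕ} {r : ℤ} (ha : 0 < a)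
    (hrel : ∀ᶠ N in (𝓤 : Filter ι), (b * g N : ℤ) = a * h N + r) :
    ∃ (M : ι → ℕ) (s t : ℤ), Tendsto M 𝓤 atTop ∧ (∀ N, M N ≤ g N) ∧
      ∀ᶠ N in (𝓤 : Filter ι), (g N : ℤ) = a * M N + s ∧ (h N : ℤ) = b * M N + t := by
  obtain ⟨s, -, hs⟩ := (Ultrafilter.eventually_exists_mem_iff (f := 𝓤)
    (P := fun s N => g N % a = s) (Set.finite_Iio a)).1
    (.of_forall fun N => ⟨_, Nat.mod_lt _ ha, rfl⟩)
  refine ⟨fun N => g N / a, s, (b * s - r) / a, ?_, fun N => Nat.div_le_self _ _, ?_⟩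
  · exact (Nat.tendsto_div_const_atTop ha.ne').comp hg
  · filter_upwards [hs, hrel] with N hsN hrelN
    have hgN : (g N : ℤ) = a * (g N / a : ℕ) + s := by
      rw [← hsN]
      exact_mod_cast (Nat.div_add_mod (g N) a).symm
    refine ⟨hgN, ?_⟩
    have hdvd : (b * s - r : ℤ) = a * (h N - b * (g N / a : ℕ)) := by
      rw [hgN] at hrelN
      linarith
    rw [hdvd, Int.mul_ediv_cancel_left _ (by lia)]
    ring

end UltrafilterLimits

section BlockApproximation

lemma aeval_invPow_walkPolynomial {α σ : Type*} {q : ℝ} {m : σ → ℕ} {e : α → σ →₀ ℕ} {ρ : α → ℚ}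
    {G : α → ℕ} (hG : ∀ a, ((ρ a : ℚ) : ℝ) * (q ^ Finsupp.weight m (e a))⁻¹ = (q ^ G a)⁻¹)
    (c : α → ℚ) (w : ℕ → α) (K : ℕ) :
    MvPolynomial.aeval (invPow q m) (walkPolynomial e ρ c w K) = blockSum q c G w K := by
  rw [walkPolynomial, map_sum, blockSum]
  refine Finset.sum_congr rfl fun k _ => ?_
  rw [MvPolynomial.aeval_monomial, Finsupp.prod, prod_invPow, eq_ratCast, Rat.cast_mul, mul_assoc,
    blockStart, ← Finset.prod_pow_eq_pow_sum, ← Finset.prod_inv_distrib, walkPos, map_sum,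
    ← Finset.prod_pow_eq_pow_sum, ← Finset.prod_inv_distrib, walkWeight, Rat.cast_prod,
    ← Finset.prod_mul_distrib]
  simp only [hG]

/-- At the scales `n N → ∞`, numbers `y N` affinely related to `x` which are approximated by the
sums over the blocks `true` in words `w N` in two blocks, of lengths `G N b` comparable to `n N`. -/
structure IsBlockApproximation (x : ℝ) (q c : ℕ) (n : ℕ → ℕ) (G : ℕ → Bool → ℕ)
    (w : ℕ → ℕ → Bool) (y : ℕ → ℝ) : Prop where
  lt : ∀ N, N < n N
  le_four_mul : ∀ N b, n N ≤ 4 * G N b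
  le_mul : ∀ N b, G N b ≤ c * n N
  affineRelated : ∀ N, AffineRelated (q ^ (c * n N)) x (y N)
  abs_sub_le : ∀ N K, |y N - blockSum q (fun b => b.toNat) (G N) (w N) K| ≤
    q ^ (G N true + G N false) * ((q : ℝ) ^ blockStart (G N) (w N) K)⁻¹

variable {x : ℝ} {q c c' : ℕ} {n : ℕ → ℕ} {G : ℕ → Bool → ℕ} {w : ℕ → ℕ → Bool} {y : ℕ → ℝ}
  {l : Filter ℕ} {𝓤 : Ultrafilter ℕ}

lemma exists_isBlockApproximation (hq : 2 ≤ q) (hx : x ∈ Set.Ioo (0 : ℝ) 1) (hirr : Irrational x)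
    {C : ℕ} (hC : ∃ᶠ n in atTop, factorComplexity (qdigit q x) n ≤ n + C) :
    ∃ c n G w y, IsBlockApproximation x q c n G w y := by
  have hq1 : (1 : ℝ) ≤ q := by exact_mod_cast one_le_two.trans hq
  obtain ⟨C', hC'⟩ := exists_isBlockDecomposition (finite_range_qdigit (by lia) x)
    (isAperiodic_qdigit hq hx.1.le hirr) hC
  choose n hn i₀ p G w hi₀ hG hw using fun N => hC' (N + 1)
  choose y hxy hy using fun N => (hw N).exists_affineRelated hq hx hirr fun b => by
    have := (hG N b).1
    have := hn N
    lia
  have hle (N : ℕ) : n N + C' ≤ (C' + 1) * n N := by nlinarith [hn N]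
  refine ⟨3 * (C' + 1), n, G, w, y, hn, fun N b => (hG N b).1, fun N b => ?_,
    fun N => (hxy N).mono (pow_le_pow_right₀ hq1 ?_), hy⟩
  · linarith [hle N, (hG N b).2]
  · linarith [hle N, (hG N true).2, (hG N false).2, hi₀ N]

namespace IsBlockApproximation

variable (h : IsBlockApproximation x q c n G w y)

include h

lemma tendsto_atTop (hl : l ≤ atTop) (b : Bool) : Tendsto (fun N => G N b) l atTop := by
  refine Tendsto.mono_left (tendsto_atTop_atTop.2 fun k => ⟨4 * k, fun N hN => ?_⟩) hl
  linarith [h.lt N, h.le_four_mul N b]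

lemma mul_le_four_mul_blockStart (N : ℕ) (W : ℕ → Bool) (K : ℕ) :
    K * n N ≤ 4 * blockStart (G N) W K := by
  rw [blockStart, Finset.mul_sum]
  simpa using Finset.card_nsmul_le_sum (Finset.range K) (fun k => 4 * G N (W k)) (n N)
    fun k _ => h.le_four_mul N (W k)

lemma hasExpansion {σ : Type*} {H : ℕ → ℕ} {m : ℕ → σ → ℕ} {e : Bool → σ →₀ ℕ} {ρ : Bool → ℚ}
    {W : ℕ → Bool} (hq : 0 < q) (hW : ∀ K, ∀ᶠ N in l, ∀ k < K, w N k = W k) (he : ∀ b, e b ≠ 0)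
    (hG : ∀ᶠ N in l, ∀ b,
      ((ρ b : ℚ) : ℝ) * ((q : ℝ) ^ Finsupp.weight (m N) (e b))⁻¹ = ((q : ℝ) ^ G N b)⁻¹)
    (hH : ∀ N, H N ≤ G N true) :
    HasExpansion l q H m y (walkSeries e ρ (fun b => b.toNat) W) := by
  intro K
  have hq1 : (1 : ℝ) ≤ q := by exact_mod_cast hq
  let K' := 4 * c * (K + 2)
  refine ⟨walkPolynomial e ρ (fun b => b.toNat) W (K + K'), ?_, .of_bound 1 ?_⟩
  · exact le_trans (by norm_cast; lia) (le_order_walkSeries_sub ρ _ W he _)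
  filter_upwards [hW (K + K'), hG] with N hWN hGN
  have hsum := h.abs_sub_le N (K + K')
  have hexp : G N true + G N false + K * H N ≤ blockStart (G N) (w N) (K + K') := by
    have hHN := Nat.mul_le_mul_left K ((hH N).trans (h.le_mul N true))
    have hstart := h.mul_le_four_mul_blockStart N (w N) (K + K')
    have hK' : K' * n N = 4 * (K * (c * n N) + 2 * (c * n N)) := by simp only [K']; ring
    linarith [h.le_mul N true, h.le_mul N false, Nat.zero_le (K * n N)]
  rw [blockSum_congr _ _ _ hWN, ← aeval_invPow_walkPolynomial hGN] at hsum
  rw [Real.norm_eq_abs, Real.norm_of_nonneg (by positivity), one_mul]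
  refine hsum.trans ?_
  rw [← div_eq_mul_inv, div_le_iff₀ (by positivity), ← div_eq_inv_mul, le_div_iff₀ (by positivity),
    ← pow_add]
  exact pow_le_pow_right₀ hq1 hexp

theorem not_irrational {σ : Type*} [Finite σ] {H : ℕ → ℕ} {m : ℕ → σ → ℕ} {e : Bool → σ →₀ ℕ}
    {ρ : Bool → ℚ} (hq : 2 ≤ q) (hx : IsAlgebraic ℚ x) (hm : IsMahlerScale 𝓤 c' H m)
    (he : ∀ b, e b ≠ 0)
    (hG : ∀ᶠ N in (𝓤 : Filter ℕ), ∀ b,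
      ((ρ b : ℚ) : ℝ) * ((q : ℝ) ^ Finsupp.weight (m N) (e b))⁻¹ = ((q : ℝ) ^ G N b)⁻¹)
    (hH : ∀ N, H N ≤ G N true) (hn : ∀ᶠ N in (𝓤 : Filter ℕ), c * n N ≤ c' * H N) :
    ¬ Irrational x := by
  have hq1 : (1 : ℝ) ≤ q := by exact_mod_cast one_le_two.trans hq
  obtain ⟨W, hW⟩ := exists_forall_eventually_forall_lt_eq 𝓤 w
  have hy := h.hasExpansion (two_pos.trans_le hq) hW he hG hH
  have hxy : ∀ᶠ N in (𝓤 : Filter ℕ), AffineRelated (q ^ (c' * H N)) x (y N) :=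
    hn.mono fun N hN => (h.affineRelated N).mono (pow_le_pow_right₀ hq1 hN)
  obtain ⟨D, P, hD, hDP⟩ := (hasFinitelyManyPatterns_walkSeries ρ _ W
    he).exists_mul_eq_of_isAlgebraic (hy.isAlgebraic hx hq hm hxy)
  exact hy.not_irrational_of_mul_eq hx hq hm hxy hD hDP

end IsBlockApproximation

end BlockApproximation

section Conclusion

variable {x : ℝ} {q c : ℕ} {n : ℕ → ℕ} {G : ℕ → Bool → ℕ} {w : ℕ → ℕ → Bool} {y : ℕ → ℝ}
  {𝓤 : Ultrafilter ℕ}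

lemma weight_bool (m : Bool → ℕ) (γ : Bool →₀ ℕ) :
    Finsupp.weight m γ = γ true * m true + γ false * m false := by
  simp [Finsupp.weight_apply, Finsupp.sum_fintype]

lemma isMahlerScale_unit {ι : Type*} {l : Filter ι} {M : ι → ℕ} (hM : Tendsto M l atTop) {c : ℕ}
    (hc : 0 < c) : IsMahlerScale l c M fun N (_ : Unit) => M N where
  tendsto_atTop := hM
  le _ _ := le_rfl
  le_mul _ _ := Nat.le_mul_of_pos_left _ hc
  independent γ γ' hne := by
    have hne' : (γ () : ℤ) - γ' () ≠ 0 := by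
      refine fun h => hne (Finsupp.ext fun _ => ?_)
      exact_mod_cast sub_eq_zero.1 h
    refine tendsto_atTop_mono (fun N => ?_) (tendsto_natCast_atTop_atTop.comp hM)
    have hdiff : (Finsupp.weight (fun _ => M N) γ : ℤ) - Finsupp.weight (fun _ => M N) γ' =
        (γ () - γ' ()) * M N := by
      simp [Finsupp.weight_apply, Finsupp.sum_fintype, sub_mul]
    rw [hdiff, abs_mul, Nat.abs_cast]
    exact le_mul_of_one_le_left (Nat.cast_nonneg _) (Int.one_le_abs hne')

namespace IsBlockApproximation

variable (h : IsBlockApproximation x q c n G w y)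

include h

lemma not_irrational_of_independent (hq : 2 ≤ q) (hx : IsAlgebraic ℚ x)
    (hU : (𝓤 : Filter ℕ) ≤ atTop)
    (hG : ∀ γ γ' : Bool →₀ ℕ, γ ≠ γ' →
      Tendsto (fun N => |(Finsupp.weight (G N) γ : ℤ) - Finsupp.weight (G N) γ'|) 𝓤 atTop) :
    ¬ Irrational x := by
  let H (N : ℕ) : ℕ := min (G N true) (G N false)
  have hn (N : ℕ) : c * n N ≤ 4 * c * H N := by
    have hnH : n N ≤ 4 * H N := by
      have := h.le_four_mul N true
      have := h.le_four_mul N false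
      lia
    linarith [Nat.mul_le_mul_left c hnH]
  have hm : IsMahlerScale 𝓤 (4 * c) H G :=
    { tendsto_atTop := Filter.tendsto_atTop.2 fun k =>
        (((h.tendsto_atTop hU true).eventually_ge_atTop k).and
          ((h.tendsto_atTop hU false).eventually_ge_atTop k)).mono fun N hN => le_min hN.1 hN.2
      le := fun N => Bool.forall_bool.2 ⟨min_le_right _ _, min_le_left _ _⟩
      le_mul := fun N b => (h.le_mul N b).trans (hn N)
      independent := hG }
  exact h.not_irrational hq hx hm (e := fun b => .single b 1) (ρ := 1)
    (fun b => Finsupp.single_ne_zero.2 one_ne_zero)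
    (.of_forall fun N b => by simp [Finsupp.weight_apply]) (fun N => min_le_left _ _)
    (.of_forall hn)

lemma not_irrational_of_eq_mul_add (hq : 2 ≤ q) (hx : IsAlgebraic ℚ x) {M : ℕ → ℕ}
    (hM : Tendsto M 𝓤 atTop) (hMG : ∀ N, M N ≤ G N true) {a : Bool → ℕ} (ha : ∀ b, 0 < a b)
    {r : Bool → ℤ} (hG : ∀ᶠ N in (𝓤 : Filter ℕ), ∀ b, (G N b : ℤ) = a b * M N + r b) :
    ¬ Irrational x := by
  have hq0 : (q : ℝ) ≠ 0 := by exact_mod_cast (two_pos.trans_le hq).ne'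
  set c' := 4 * c * (a true + (r true).natAbs) + 1
  refine h.not_irrational hq hx (isMahlerScale_unit hM (Nat.succ_pos _ : 0 < c'))
    (e := fun b => .single () (a b)) (ρ := fun b => (q : ℚ) ^ (-r b))
    (fun b => Finsupp.single_ne_zero.2 (ha b).ne') ?_ hMG ?_
  · filter_upwards [hG] with N hN b
    rw [← zpow_natCast (q : ℝ) (G N b), hN b, zpow_add₀ hq0, mul_inv, mul_comm]
    simp [Finsupp.weight_apply, ← zpow_natCast]
  · filter_upwards [hG, hM.eventually_ge_atTop 1] with N hN hMN
    have hle : G N true ≤ (a true + (r true).natAbs) * M N := by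
      have := hN true
      zify
      nlinarith [le_abs_self (r true), abs_nonneg (r true)]
    calc c * n N ≤ c * (4 * ((a true + (r true).natAbs) * M N)) := by
          have := h.le_four_mul N true
          gcongr
          lia
      _ = 4 * c * (a true + (r true).natAbs) * M N := by ring
      _ ≤ c' * M N := Nat.mul_le_mul_right _ (Nat.le_succ _)

theorem not_irrational_of_isAlgebraic (hq : 2 ≤ q) (hx : IsAlgebraic ℚ x) : ¬ Irrational x := by
  have hU : (hyperfilter ℕ : Filter ℕ) ≤ atTop := Nat.cofinite_eq_atTop ▸ hyperfilter_le_cofinite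
  have hGt := h.tendsto_atTop hU
  by_cases hind : ∀ γ γ' : Bool →₀ ℕ, γ ≠ γ' → Tendsto
      (fun N => |(Finsupp.weight (G N) γ : ℤ) - Finsupp.weight (G N) γ'|) (hyperfilter ℕ) atTop
  · exact h.not_irrational_of_independent hq hx hU hind
  push Not at hind
  obtain ⟨γ, γ', hne, hnot⟩ := hind
  obtain ⟨δ, hδ⟩ := exists_eventually_eq_of_not_tendsto_abs_atTop hnot
  have hne' : (γ true - γ' true : ℤ) ≠ 0 ∨ (γ false - γ' false : ℤ) ≠ 0 := by
    by_contra! heq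
    exact hne (Finsupp.ext (Bool.forall_bool.2 ⟨by lia, by lia⟩))
  obtain ⟨a, b, r, ha, hb, hrel⟩ := exists_pos_mul_eq_mul_add (hGt true) (hGt false) hne' <|
    hδ.mono fun N hN => by
      rw [weight_bool, weight_bool] at hN
      push_cast at hN
      linarith
  obtain ⟨M, s, t, hM, hMG, hMst⟩ := exists_eventually_eq_mul_add (hGt true) ha hrel
  exact h.not_irrational_of_eq_mul_add hq hx hM hMG (a := fun i => if i then a else b)
    (r := fun i => if i then s else t) (Bool.forall_bool.2 ⟨hb, ha⟩)
    (hMst.mono fun N hN => Bool.forall_bool.2 ⟨hN.2, hN.1⟩)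

end IsBlockApproximation

end Conclusion

/-- If `x ∈ (0,1)` is an irrational algebraic number, then for every base `q ≥ 2` the complexity
function `p` of its base-`q` digit sequence satisfies `liminf (p n - n) = +∞`. -/
theorem complexity_of_algebraic_liminf_sub (x : ℝ) (hx : x ∈ Set.Ioo (0 : ℝ) 1)
    (hirr : Irrational x) (halg : IsAlgebraic ℚ x) :
    ∀ q : ℕ, 2 ≤ q →
      Filter.liminf
        (fun n : ℕ => (((qComplexity q x n : ℝ) - (n : ℝ) : ℝ) : EReal)) Filter.atTop = ⊤ := by
  intro q hq
  by_contra hne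
  obtain ⟨R, hR, -⟩ := EReal.lt_iff_exists_real_btwn.1 (lt_top_iff_ne_top.2 hne)
  obtain ⟨C, hRC⟩ := exists_nat_ge R
  have hC : ∃ᶠ n in atTop, factorComplexity (qdigit q x) n ≤ n + C := by
    refine (frequently_lt_of_liminf_lt (by isBoundedDefault) hR).mono fun n hn => ?_
    rw [EReal.coe_lt_coe_iff, qComplexity_eq_factorComplexity] at hn
    exact_mod_cast (sub_lt_iff_lt_add'.1 hn).le.trans (add_le_add_right hRC (n : ℝ))
  obtain ⟨c, n, G, w, y, h⟩ := exists_isBlockApproximation hq hx hirr hC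
  exact h.not_irrational_of_isAlgebraic hq halg hirr
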